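/- arXiv:1905.13655 — 2 statements merged into one kernel-verified Lean document; each statement's English description precedes it below -/
import Mathlib

section
/- Let N ≥ 3 be an integer, let A₁, …, A_m ∈ ℝ^{d×d} be symmetric, pairwise commuting, linearly independent matrices and y₁, …, y_m ∈ ℝ. For each α > 0 let W_{α,1}, …, W_{α,N} : [0,∞) → ℝ^{d×d} be differentiable with W_{α,j}(0) = α·I for every j and, for all t ≥ 0 and every j ∈ {1,…,N}, W_{α,j}′(t) = −(W_{α,N}(t)⋯W_{α,j+1}(t))ᵀ · ∇ℓ(P_α(t)) · (W_{α,j−1}(t)⋯W_{α,1}(t))ᵀ, where P_α(t) := W_{α,N}(t)·W_{α,N−1}(t)⋯W_{α,1}(t), ∇ℓ(W) = Σ_{i=1}^m (⟨A_i, W⟩ − y_i)·A_i, and empty products are the identity (gradient flow on a depth-N matrix factorization initialized at α·I). Assume that for every α > 0 the limit W_∞(α) := lim_{t→∞} P_α(t) exists, that the limit W̄ := lim_{α→0⁺} W_∞(α) exists, that W̄ is positive semidefinite, and that ⟨A_i, W̄⟩ = y_i for all i. Then W̄ has minimal nuclear norm among feasible positive semidefinite matrices: for every positive semidefinite W ∈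 ℝ^{d×d} with ⟨A_i, W⟩ = y_i for all i, tr(W̄) ≤ tr(W). -/
open Matrix Filter Topology

/-- The Frobenius gradient of the loss `ℓ(W) = ½ Σᵢ (yᵢ − ⟨Aᵢ, W⟩)²`, where
`⟨A, W⟩ = tr(Aᵀ W)` is the Frobenius inner product. -/
noncomputable def gradLoss {d m : ℕ} (A : Fin m → Matrix (Fin d) (Fin d) ℝ)
    (y : Fin m → ℝ) (W : Matrix (Fin d) (Fin d) ℝ) : Matrix (Fin d) (Fin d) ℝ :=
  ∑ i, ((((A i)ᵀ * W).trace) - y i) • A i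

/-- `prodDesc W lo hi = W hi * W (hi-1) * ⋯ * W lo` (the identity matrix if `hi < lo`). -/
def prodDesc {d : ℕ} (W : ℕ → Matrix (Fin d) (Fin d) ℝ) (lo hi : ℕ) :
    Matrix (Fin d) (Fin d) ℝ :=
  ((List.range (hi + 1 - lo)).map (fun i => W (hi - i))).prod

/-!
Orthogonally diagonalize the `A i` simultaneously; this leaves the flow, the traces and positivity
unchanged. The flow then stays diagonal, and its factors stay equal because they start equal, so
their common `k`-th entry `u k` is positive and solves `u k' = -g k * u k ^ (N - 1)`, where `g` is
the diagonal of the gradient of the loss. Hence `u k ^ (-(N - 2))` has derivative `(N - 2) * g k`,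
and since `g` lies in the span of the measurements, every `δ` orthogonal to them satisfies
`∑ k, (α / u k) ^ (N - 2) * δ k = ∑ k, δ k`. For `δ = W' - Wbar` the weights on the left are
nonnegative, and as `α → 0` they tend to zero at each `k` where `Wbar k k ≠ 0`, because there
`u k` stays away from zero. The left-hand side is therefore nonnegative in the limit.
-/

section ODE

theorem eqOn_Ici_of_hasDerivAt_of_locallyLipschitz {E : Type*} [NormedAddCommGroup E]
    [NormedSpace ℝ E] {v : E → E} (hv : LocallyLipschitz v) {f g : ℝ → E} {a : ℝ}
    (hf : ∀ t, a ≤ t → HasDerivAt f (v (f t)) t) (hg : ∀ t, a ≤ t → HasDerivAt g (v (g t)) t)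
    (h0 : f a = g a) : Set.EqOn f g (Set.Ici a) := by
  intro t ht
  have hfc : ContinuousOn f (Set.Icc a t) := fun x hx => (hf x hx.1).continuousAt.continuousWithinAt
  have hgc : ContinuousOn g (Set.Icc a t) := fun x hx => (hg x hx.1).continuousAt.continuousWithinAt
  obtain ⟨K, hK⟩ := hv.locallyLipschitzOn.exists_lipschitzOnWith_of_compact
    ((isCompact_Icc.image_of_continuousOn hfc).union (isCompact_Icc.image_of_continuousOn hgc))
  exact ODE_solution_unique_of_mem_Icc_right (fun _ _ => hK) hfc
    (fun x hx => (hf x hx.1).hasDerivWithinAt)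
    (fun x hx => .inl ⟨x, Set.Ico_subset_Icc_self hx, rfl⟩) hgc
    (fun x hx => (hg x hx.1).hasDerivWithinAt)
    (fun x hx => .inr ⟨x, Set.Ico_subset_Icc_self hx, rfl⟩) h0 ⟨ht, le_rfl⟩

theorem eq_mul_exp_integral_of_hasDerivAt {h c : ℝ → ℝ} {a : ℝ} (hc : ContinuousOn c (Set.Ici a))
    (hh : ∀ t, a ≤ t → HasDerivAt h (c t * h t) t) {t : ℝ} (ht : a ≤ t) :
    h t = h a * Real.exp (∫ s in a..t, c s) := by
  have hderiv : ∀ x ∈ Set.Icc a t,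
      HasDerivWithinAt (fun u => h u * Real.exp (-∫ s in a..u, c s)) 0 (Set.Icc a t) x := by
    intro x hx
    have : Fact (x ∈ Set.Icc a t) := ⟨hx⟩
    have hct : ContinuousOn c (Set.Icc a t) := hc.mono Set.Icc_subset_Ici_self
    have hint := intervalIntegral.integral_hasDerivWithinAt_right (s := Set.Icc a t)
      (hct.mono (Set.Icc_subset_Icc_right hx.2) |>.intervalIntegrable_of_Icc hx.1)
      (hct.stronglyMeasurableAtFilter_nhdsWithin measurableSet_Icc x) (hct x hx)
    convert! (hh x hx.1).hasDerivWithinAt.mul hint.neg.exp using 1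
    ring
  have hconst := constant_of_derivWithin_zero
    (fun x hx => (hderiv x hx).differentiableWithinAt)
    (fun x hx => (hderiv x (Set.Ico_subset_Icc_self hx)).derivWithin
      (uniqueDiffOn_Icc (hx.1.trans_lt hx.2) x (Set.Ico_subset_Icc_self hx))) t ⟨ht, le_rfl⟩
  simp only [intervalIntegral.integral_same, neg_zero, Real.exp_zero, mul_one] at hconst
  rw [← hconst, mul_assoc, ← Real.exp_add, neg_add_cancel, Real.exp_zero, mul_one]

/-- The difference of two factors solves a homogeneous linear equation. -/
theorem eq_of_hasDerivAt_neg_mul_prod_erase {ι : Type*} [DecidableEq ι] {s : Finset ι}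
    {w : ι → ℝ → ℝ} {g : ℝ → ℝ} {a : ℝ} (hg : ContinuousOn g (Set.Ici a))
    (hw : ∀ t, a ≤ t → ∀ j ∈ s, HasDerivAt (w j) (-(g t * ∏ i ∈ s.erase j, w i t)) t)
    {i j : ι} (hi : i ∈ s) (hj : j ∈ s) (h0 : w i a = w j a) {t : ℝ} (ht : a ≤ t) :
    w i t = w j t := by
  obtain rfl | hij := eq_or_ne i j
  · rfl
  have hwc : ∀ k ∈ s, ContinuousOn (w k) (Set.Ici a) :=
    fun k hk x hx => (hw x hx k hk).continuousAt.continuousWithinAt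
  have hcont : ContinuousOn (fun x => g x * ∏ k ∈ (s.erase i).erase j, w k x) (Set.Ici a) :=
    hg.mul <| continuousOn_finsetProd _ fun k hk =>
      hwc k (Finset.mem_of_mem_erase (Finset.mem_of_mem_erase hk))
  have hdiff : ∀ x, a ≤ x → HasDerivAt (w i - w j)
      ((g x * ∏ k ∈ (s.erase i).erase j, w k x) * (w i - w j) x) x := by
    intro x hx
    convert! (hw x hx i hi).sub (hw x hx j hj) using 1
    rw [← Finset.mul_prod_erase _ _ (Finset.mem_erase.2 ⟨hij.symm, hj⟩),
      ← Finset.mul_prod_erase (s.erase j) _ (Finset.mem_erase.2 ⟨hij, hi⟩),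
      Finset.erase_right_comm (s := s), Pi.sub_apply]
    ring
  have := eq_mul_exp_integral_of_hasDerivAt hcont hdiff ht
  rw [Pi.sub_apply, Pi.sub_apply, h0, sub_self, zero_mul] at this
  exact sub_eq_zero.1 this

theorem sum_inv_pow_mul_eq_of_hasDerivAt {ι : Type*} [Fintype ι] {u g : ι → ℝ → ℝ} {δ : ι → ℝ}
    {n : ℕ} {a : ℝ} (hpos : ∀ t, a ≤ t → ∀ k, 0 < u k t)
    (hu : ∀ t, a ≤ t → ∀ k, HasDerivAt (u k) (-(g k t * u k t ^ (n + 1))) t)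
    (hg : ∀ t, a ≤ t → ∑ k, g k t * δ k = 0) {t : ℝ} (ht : a ≤ t) :
    ∑ k, (u k t ^ n)⁻¹ * δ k = ∑ k, (u k a ^ n)⁻¹ * δ k := by
  have hterm : ∀ x, a ≤ x → ∀ k, HasDerivAt (fun s => (u k s ^ n)⁻¹ * δ k)
      (n * (g k x * δ k)) x := by
    intro x hx k
    have hne := (hpos x hx k).ne'
    convert! (((hu x hx k).fun_pow n).fun_inv (pow_ne_zero n hne)).mul_const (δ k) using 1
    cases n with
    | zero => simp
    | succ n =>
      rw [Nat.add_sub_cancel]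
      field_simp
      ring
  have hsum : ∀ x, a ≤ x → HasDerivAt (fun s => ∑ k, (u k s ^ n)⁻¹ * δ k) 0 x := by
    intro x hx
    convert! HasDerivAt.fun_sum (u := Finset.univ) fun k _ => hterm x hx k using 1
    rw [← Finset.mul_sum, hg x hx, mul_zero]
  exact constant_of_has_deriv_right_zero
    (fun x hx => (hsum x hx.1).continuousAt.continuousWithinAt)
    (fun x hx => (hsum x hx.1).hasDerivWithinAt) t ⟨ht, le_rfl⟩

end ODE

section Calculus

theorem contDiff_list_prod_map {𝕜 E R ι : Type*} [NontriviallyNormedField 𝕜]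
    [NormedAddCommGroup E] [NormedSpace 𝕜 E] [NormedRing R] [NormedAlgebra 𝕜 R] {n : WithTop ℕ∞}
    {f : ι → E → R} {l : List ι} (h : ∀ i ∈ l, ContDiff 𝕜 n (f i)) :
    ContDiff 𝕜 n fun x => (l.map fun i => f i x).prod := by
  induction l with
  | nil => simpa using contDiff_const
  | cons i l ih =>
    simp only [List.map_cons, List.prod_cons]
    exact (h i List.mem_cons_self).mul (ih fun j hj => h j (List.mem_cons_of_mem i hj))

theorem hasDerivAt_matrix_iff {𝕜 F m n : Type*} [NontriviallyNormedField 𝕜] [NormedAddCommGroup F]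
    [NormedSpace 𝕜 F] [Finite m] [Finite n] {M : 𝕜 → Matrix m n F} {M' : Matrix m n F} {t : 𝕜} :
    HasDerivAt M M' t ↔ ∀ p q, HasDerivAt (fun s => M s p q) (M' p q) t := by
  have := Fintype.ofFinite m
  have := Fintype.ofFinite n
  exact hasDerivAt_pi.trans (forall_congr' fun _ => hasDerivAt_pi)

theorem tendsto_div_rpow_pow_mul {ι : Type*} {l : Filter ι} {f P : ι → ℝ} {a p b e : ℝ} (n : ℕ)
    (hf : Tendsto f l (𝓝 a)) (hP : Tendsto P l (𝓝 p)) (hpb : b = 0 ∨ 0 < p) :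
    Tendsto (fun x => (f x / P x ^ e) ^ n * b) l (𝓝 ((a / p ^ e) ^ n * b)) := by
  obtain rfl | hp := hpb
  · simpa only [mul_zero] using tendsto_const_nhds
  · exact ((hf.div (hP.rpow_const (.inl hp.ne')) (Real.rpow_pos_of_pos hp e).ne').pow n).mul_const b

end Calculus

section Diagonalization

theorem exists_orthonormalBasis_forall_exists_apply_eq_smul {𝕜 E ι : Type*} [RCLike 𝕜]
    [NormedAddCommGroup E] [InnerProductSpace 𝕜 E] [FiniteDimensional 𝕜 E]
    {T : ι → E →ₗ[𝕜] E} (hT : ∀ i, (T i).IsSymmetric) (hcomm : ∀ i j, Commute (T i) (T j)) :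
    ∃ b : OrthonormalBasis (Fin (Module.finrank 𝕜 E)) 𝕜 E, ∀ i a, ∃ μ : 𝕜, T i (b a) = μ • b a := by
  classical
  have hV := DirectSum.isInternal_ne_bot_iff.2
    (LinearMap.IsSymmetric.directSum_isInternal_of_pairwise_commute hT fun i j _ => hcomm i j)
  have horth := LinearMap.IsSymmetric.orthogonalFamily_iInf_eigenspaces hT
  have := iSupIndep.fintypeNeBotOfFiniteDimensional horth.independent
  have horth' := horth.comp (Subtype.val_injective
    (p := fun χ : ι → 𝕜 => (⨅ j, Module.End.eigenspace (T j) (χ j)) ≠ ⊥))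
  refine ⟨hV.subordinateOrthonormalBasis rfl horth', fun i a =>
    ⟨(hV.subordinateOrthonormalBasisIndex rfl a horth').1 i, ?_⟩⟩
  exact Module.End.mem_eigenspace_iff.1 <| (Submodule.mem_iInf _).1
    (hV.subordinateOrthonormalBasis_subordinate rfl a horth') i

theorem exists_unitary_forall_isDiag {𝕜 n ι : Type*} [RCLike 𝕜] [Fintype n] [DecidableEq n]
    {A : ι → Matrix n n 𝕜} (hA : ∀ i, (A i).IsHermitian) (hcomm : ∀ i j, Commute (A i) (A j)) :
    ∃ U : unitaryGroup n 𝕜, ∀ i, (Unitary.conjStarAlgAut 𝕜 _ U (A i)).IsDiag := by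
  obtain ⟨b', hb'⟩ := exists_orthonormalBasis_forall_exists_apply_eq_smul
    (fun i => isSymmetric_toEuclideanLin_iff.2 (hA i))
    (fun i j => (hcomm i j).map (toLpLinAlgEquiv 2))
  let b := b'.reindex (Fintype.equivOfCardEq (by simp : Fintype.card (Fin _) = Fintype.card n))
  let U : unitaryGroup n 𝕜 :=
    ⟨_, (EuclideanSpace.basisFun n 𝕜).toMatrix_orthonormalBasis_mem_unitary b⟩
  refine ⟨star U, fun i p q hpq => ?_⟩
  obtain ⟨μ, hμ⟩ := hb' i ((Fintype.equivOfCardEq (by simp)).symm q)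
  replace hμ : toEuclideanLin (A i) (b q) = μ • b q := by
    simpa only [b, OrthonormalBasis.reindex_apply] using hμ
  have hcol : ∀ a c, (U : Matrix n n 𝕜) c a = b a c := fun _ _ => rfl
  calc Unitary.conjStarAlgAut 𝕜 _ (star U) (A i) p q
      = inner 𝕜 (b p) (toEuclideanLin (A i) (b q)) := by
        rw [Unitary.conjStarAlgAut_star_apply, mul_assoc]
        simp [mul_apply, PiLp.inner_apply, hcol, mulVec, dotProduct, mul_comm]
    _ = 0 := by rw [hμ, inner_smul_right, b.orthonormal.2 hpq, mul_zero]

end Diagonalization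

section ProdDesc

variable {d : ℕ} {X Y : ℕ → Matrix (Fin d) (Fin d) ℝ} {lo hi : ℕ}

theorem sub_mem_Icc_of_mem_range {lo hi i : ℕ} (h : i ∈ List.range (hi + 1 - lo)) :
    hi - i ∈ Finset.Icc lo hi := by
  rw [List.mem_range] at h
  rw [Finset.mem_Icc]
  omega

theorem prodDesc_congr (h : ∀ i ∈ Finset.Icc lo hi, X i = Y i) :
    prodDesc X lo hi = prodDesc Y lo hi :=
  congrArg List.prod (List.map_congr_left fun _ hi => h _ (sub_mem_Icc_of_mem_range hi))

theorem prodDesc_map {F : Type*} [FunLike F (Matrix (Fin d) (Fin d) ℝ) (Matrix (Fin d) (Fin d) ℝ)]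
    [MonoidHomClass F (Matrix (Fin d) (Fin d) ℝ) (Matrix (Fin d) (Fin d) ℝ)] (φ : F)
    (X : ℕ → Matrix (Fin d) (Fin d) ℝ) (lo hi : ℕ) :
    prodDesc (fun i => φ (X i)) lo hi = φ (prodDesc X lo hi) := by
  simp only [prodDesc, map_list_prod, List.map_map, Function.comp_def]

theorem prodDesc_of_isDiag (hX : ∀ i ∈ Finset.Icc lo hi, (X i).IsDiag) :
    prodDesc X lo hi = diagonal fun k => ∏ i ∈ Finset.Icc lo hi, X i k k := by
  have hlist : ((List.range (hi + 1 - lo)).map fun i => (X (hi - i)).diag).prod =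
      ∏ i ∈ Finset.Icc lo hi, (X i).diag :=
    Finset.prod_nbij' (s := Finset.range (hi + 1 - lo)) (hi - ·) (hi - ·)
      (by grind) (by grind) (by grind) (by grind) (by simp)
  calc prodDesc X lo hi
      = prodDesc (fun i => diagonalRingHom (Fin d) ℝ (X i).diag) lo hi :=
        prodDesc_congr fun i hi => (hX i hi).diagonal_diag.symm
    _ = diagonal (∏ i ∈ Finset.Icc lo hi, (X i).diag) := by
        rw [← hlist, ← diagonalRingHom_apply, map_list_prod, List.map_map]
        rfl
    _ = diagonal fun k => ∏ i ∈ Finset.Icc lo hi, X i k k :=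
        congrArg diagonal (funext fun k => Finset.prod_apply k _ _)

theorem continuousOn_prodDesc {T : Type*} [TopologicalSpace T] {s : Set T}
    {X : ℕ → T → Matrix (Fin d) (Fin d) ℝ} (hX : ∀ i ∈ Finset.Icc lo hi, ContinuousOn (X i) s) :
    ContinuousOn (fun t => prodDesc (fun i => X i t) lo hi) s :=
  continuousOn_list_prod _ fun _ hi => hX _ (sub_mem_Icc_of_mem_range hi)

open scoped Matrix.Norms.L2Operator in
theorem contDiff_prodDesc {E : Type*} [NormedAddCommGroup E] [NormedSpace ℝ E] {n : WithTop ℕ∞}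
    {X : ℕ → E → Matrix (Fin d) (Fin d) ℝ} (hX : ∀ i ∈ Finset.Icc lo hi, ContDiff ℝ n (X i)) :
    ContDiff ℝ n fun x => prodDesc (fun i => X i x) lo hi :=
  contDiff_list_prod_map fun _ hi => hX _ (sub_mem_Icc_of_mem_range hi)

end ProdDesc

section GradLoss

variable {d m : ℕ} {A : Fin m → Matrix (Fin d) (Fin d) ℝ}

theorem starHom_map_transpose {n R F : Type*} [Star R] [TrivialStar R]
    [FunLike F (Matrix n n R) (Matrix n n R)] [StarHomClass F (Matrix n n R) (Matrix n n R)]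
    (φ : F) (M : Matrix n n R) : φ Mᵀ = (φ M)ᵀ := by
  simpa only [star_eq_conjTranspose, conjTranspose_eq_transpose_of_trivial] using map_star φ M

theorem trace_map_transpose_mul_map {n K : Type*} [Fintype n] [Field K] [StarRing K]
    [TrivialStar K] (φ : Matrix n n K ≃⋆ₐ[K] Matrix n n K) (M P : Matrix n n K) :
    ((φ M)ᵀ * φ P).trace = (Mᵀ * P).trace := by
  classical
  rw [← starHom_map_transpose, ← map_mul, Matrix.trace_map]

theorem gradLoss_map (φ : Matrix (Fin d) (Fin d) ℝ ≃⋆ₐ[ℝ] Matrix (Fin d) (Fin d) ℝ)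
    (A : Fin m → Matrix (Fin d) (Fin d) ℝ) (y : Fin m → ℝ) (P : Matrix (Fin d) (Fin d) ℝ) :
    gradLoss (fun i => φ (A i)) y (φ P) = φ (gradLoss A y P) := by
  simp only [gradLoss, trace_map_transpose_mul_map, map_sum, map_smul]

theorem sum_gradLoss_apply_self_mul_eq_zero (hA : ∀ i, (A i).IsDiag)
    {Δ : Matrix (Fin d) (Fin d) ℝ} (hΔ : ∀ i, ((A i)ᵀ * Δ).trace = 0) (y : Fin m → ℝ)
    (P : Matrix (Fin d) (Fin d) ℝ) :
    ∑ k, gradLoss A y P k k * Δ k k = 0 := by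
  have hterm : ∀ i, ∑ k, A i k k * Δ k k = 0 := by
    intro i
    rw [← hΔ i, ← (hA i).diagonal_diag]
    simp [trace]
  simp only [gradLoss, Matrix.sum_apply, Matrix.smul_apply, smul_eq_mul, Finset.sum_mul]
  rw [Finset.sum_comm]
  simp only [mul_assoc, ← Finset.mul_sum, hterm, mul_zero, Finset.sum_const_zero]

open scoped Matrix.Norms.L2Operator in
theorem contDiff_gradLoss (A : Fin m → Matrix (Fin d) (Fin d) ℝ) (y : Fin m → ℝ)
    {n : WithTop ℕ∞} : ContDiff ℝ n (gradLoss A y) := by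
  have hlin : ∀ i, ContDiff ℝ n fun P => ((A i)ᵀ * P).trace := fun i =>
    (LinearMap.toContinuousLinearMap
      ((traceLinearMap (Fin d) ℝ ℝ).comp (LinearMap.mulLeft ℝ (A i)ᵀ))).contDiff
  exact ContDiff.sum fun i _ => ((hlin i).sub contDiff_const).smul contDiff_const

end GradLoss

section GradientFlow

variable {d m N : ℕ} {A : Fin m → Matrix (Fin d) (Fin d) ℝ} {y : Fin m → ℝ}

/-- The velocity of the `j`-th factor `X j` under the gradient flow of the loss of the depth-`N`
product `X N * ⋯ * X 1`. -/
noncomputable def flowField (A : Fin m → Matrix (Fin d) (Fin d) ℝ) (y : Fin m → ℝ) (N : ℕ)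
    (X : ℕ → Matrix (Fin d) (Fin d) ℝ) (j : ℕ) : Matrix (Fin d) (Fin d) ℝ :=
  -((prodDesc X (j + 1) N)ᵀ * gradLoss A y (prodDesc X 1 N) * (prodDesc X 1 (j - 1))ᵀ)

/-- `W` is a trajectory, on `[0, ∞)`, of the gradient flow on a depth-`N` matrix factorization
started at `α • 1`. The factors are `W 1, …, W N`; all other values of `W` are irrelevant. -/
structure IsGradientFlow (A : Fin m → Matrix (Fin d) (Fin d) ℝ) (y : Fin m → ℝ) (N : ℕ) (α : ℝ)
    (W : ℕ → ℝ → Matrix (Fin d) (Fin d) ℝ) : Prop where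
  init : ∀ j ∈ Finset.Icc 1 N, W j 0 = α • 1
  hasDerivAt : ∀ t, 0 ≤ t → ∀ j ∈ Finset.Icc 1 N,
    HasDerivAt (W j) (flowField A y N (fun i => W i t) j) t

theorem flowField_congr {X Y : ℕ → Matrix (Fin d) (Fin d) ℝ}
    (h : ∀ i ∈ Finset.Icc 1 N, X i = Y i) {j : ℕ} (hj : j ∈ Finset.Icc 1 N) :
    flowField A y N X j = flowField A y N Y j := by
  have hmono : ∀ lo hi, 1 ≤ lo → hi ≤ N → prodDesc X lo hi = prodDesc Y lo hi :=
    fun lo hi hlo hhi => prodDesc_congr fun i hi => h i (Finset.Icc_subset_Icc hlo hhi hi)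
  rw [Finset.mem_Icc] at hj
  rw [flowField, flowField, hmono _ _ (by omega) le_rfl, hmono _ _ le_rfl le_rfl,
    hmono _ _ le_rfl (by omega)]

theorem flowField_map (φ : Matrix (Fin d) (Fin d) ℝ ≃⋆ₐ[ℝ] Matrix (Fin d) (Fin d) ℝ)
    (A : Fin m → Matrix (Fin d) (Fin d) ℝ) (y : Fin m → ℝ) (N : ℕ)
    (X : ℕ → Matrix (Fin d) (Fin d) ℝ) (j : ℕ) :
    flowField (fun i => φ (A i)) y N (fun i => φ (X i)) j = φ (flowField A y N X j) := by
  simp only [flowField, prodDesc_map, gradLoss_map, map_neg, map_mul, starHom_map_transpose]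

open scoped Matrix.Norms.L2Operator in
theorem contDiff_flowField {E : Type*} [NormedAddCommGroup E] [NormedSpace ℝ E] {n : WithTop ℕ∞}
    {X : ℕ → E → Matrix (Fin d) (Fin d) ℝ} (hX : ∀ i ∈ Finset.Icc 1 N, ContDiff ℝ n (X i)) {j : ℕ}
    (hj : j ∈ Finset.Icc 1 N) : ContDiff ℝ n fun x => flowField A y N (fun i => X i x) j := by
  have hprod : ∀ lo hi, 1 ≤ lo → hi ≤ N → ContDiff ℝ n fun x => prodDesc (fun i => X i x) lo hi :=
    fun lo hi hlo hhi => contDiff_prodDesc fun i hi => hX i (Finset.Icc_subset_Icc hlo hhi hi)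
  have htranspose : ContDiff ℝ n (transpose : Matrix (Fin d) (Fin d) ℝ → _) :=
    (LinearMap.toContinuousLinearMap
      (transposeLinearEquiv (Fin d) (Fin d) ℝ ℝ).toLinearMap).contDiff
  rw [Finset.mem_Icc] at hj
  exact (((htranspose.comp (hprod _ _ (by omega) le_rfl)).mul
    ((contDiff_gradLoss A y).comp (hprod _ _ le_rfl le_rfl))).mul
    (htranspose.comp (hprod _ _ le_rfl (by omega)))).neg

theorem flowField_apply_self {X : ℕ → Matrix (Fin d) (Fin d) ℝ}
    (hX : ∀ i ∈ Finset.Icc 1 N, (X i).IsDiag) {j : ℕ} (hj : j ∈ Finset.Icc 1 N) (k : Fin d) :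
    flowField A y N X j k k =
      -(gradLoss A y (prodDesc X 1 N) k k * ∏ i ∈ (Finset.Icc 1 N).erase j, X i k k) := by
  rw [Finset.mem_Icc] at hj
  have hdisj : Disjoint (Finset.Icc (j + 1) N) (Finset.Icc 1 (j - 1)) := by
    rw [Finset.disjoint_left]
    simp only [Finset.mem_Icc]
    omega
  have herase : (Finset.Icc 1 N).erase j = Finset.Icc (j + 1) N ∪ Finset.Icc 1 (j - 1) := by
    ext i
    simp only [Finset.mem_erase, Finset.mem_union, Finset.mem_Icc]
    omega
  have hleft := prodDesc_of_isDiag (lo := j + 1) fun i hi =>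
    hX i (Finset.Icc_subset_Icc_left (by omega) hi)
  have hright := prodDesc_of_isDiag (hi := j - 1) fun i hi =>
    hX i (Finset.Icc_subset_Icc_right (by omega) hi)
  rw [flowField, hleft, hright, diagonal_transpose, diagonal_transpose, neg_apply, mul_diagonal,
    diagonal_mul, herase, Finset.prod_union hdisj]
  ring

namespace IsGradientFlow

open scoped Matrix.Norms.L2Operator

variable {α : ℝ} {V W : ℕ → ℝ → Matrix (Fin d) (Fin d) ℝ} {t : ℝ}

theorem map (hW : IsGradientFlow A y N α W)
    (φ : Matrix (Fin d) (Fin d) ℝ ≃⋆ₐ[ℝ] Matrix (Fin d) (Fin d) ℝ) :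
    IsGradientFlow (fun i => φ (A i)) y N α fun j t => φ (W j t) where
  init j hj := by rw [hW.init j hj, map_smul, map_one]
  hasDerivAt t ht j hj := by
    rw [flowField_map φ]
    exact (LinearMap.toContinuousLinearMap
      φ.toAlgEquiv.toLinearMap).hasFDerivAt.comp_hasDerivAt t (hW.hasDerivAt t ht j hj)

theorem unique (hV : IsGradientFlow A y N α V) (hW : IsGradientFlow A y N α W) (ht : 0 ≤ t) {j : ℕ}
    (hj : j ∈ Finset.Icc 1 N) : V j t = W j t := by
  let extend (X : Finset.Icc 1 N → Matrix (Fin d) (Fin d) ℝ) : ℕ → Matrix (Fin d) (Fin d) ℝ :=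
    Function.extend Subtype.val X 0
  have hextend : ∀ X, ∀ i (hi : i ∈ Finset.Icc 1 N), extend X i = X ⟨i, hi⟩ :=
    fun X i hi => Subtype.val_injective.extend_apply X 0 ⟨i, hi⟩
  let v (X : Finset.Icc 1 N → Matrix (Fin d) (Fin d) ℝ) (i : Finset.Icc 1 N) :=
    flowField A y N (extend X) i
  have hv : ContDiff ℝ 1 v := contDiff_pi.2 fun i => contDiff_flowField (fun k hk => by
    rw [funext fun X => hextend X k hk]
    exact contDiff_apply ℝ _ _) i.2
  have hode : ∀ {Z}, IsGradientFlow A y N α Z → ∀ s, 0 ≤ s →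
      HasDerivAt (fun s (i : Finset.Icc 1 N) => Z i s) (v fun i => Z i s) s :=
    fun {Z} hZ s hs => hasDerivAt_pi.2 fun i => by
      convert! hZ.hasDerivAt s hs i i.2 using 1
      exact flowField_congr (fun k hk => hextend _ k hk) i.2
  exact congrFun (eqOn_Ici_of_hasDerivAt_of_locallyLipschitz hv.locallyLipschitz (hode hV) (hode hW)
    (funext fun i => (hV.init i i.2).trans (hW.init i i.2).symm) ht) ⟨j, hj⟩

/-- Conjugation by the reflection in coordinate `p` fixes the measurements and the initial value, so
by uniqueness it fixes the trajectory; but it negates the off-diagonal entries in row `p`. -/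
theorem isDiag (hW : IsGradientFlow A y N α W) (hA : ∀ i, (A i).IsDiag) (ht : 0 ≤ t) {j : ℕ}
    (hj : j ∈ Finset.Icc 1 N) : (W j t).IsDiag := by
  intro p q hpq
  let s : Fin d → ℝ := Function.update 1 p (-1)
  have hs : ∀ k, s k * s k = 1 := fun k => by
    obtain rfl | hk := eq_or_ne k p <;> simp [s, *]
  have hU : diagonal s ∈ unitaryGroup (Fin d) ℝ := by
    simp [mem_unitaryGroup_iff, star_eq_conjTranspose, diagonal_mul_diagonal, hs]
  let φ := Unitary.conjStarAlgAut ℝ _ ⟨diagonal s, hU⟩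
  have hφ : ∀ M a b, φ M a b = s a * M a b * s b := fun M a b => by
    simp [φ, Unitary.conjStarAlgAut_apply, star_eq_conjTranspose]
  have hφA : (fun i => φ (A i)) = A := by
    ext i a b
    rw [hφ]
    obtain rfl | hab := eq_or_ne a b
    · rw [mul_right_comm, hs, one_mul]
    · rw [hA i hab, mul_zero, zero_mul]
  have hreflect := congrFun₂ ((hφA ▸ hW.map φ).unique hW ht hj) p q
  have hsp : s p = -1 := Function.update_self ..
  have hsq : s q = 1 := Function.update_of_ne hpq.symm ..
  rw [hφ, hsp, hsq] at hreflect
  linarith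

theorem continuousOn_gradLoss_apply (hW : IsGradientFlow A y N α W) (p q : Fin d) :
    ContinuousOn (fun t => gradLoss A y (prodDesc (fun i => W i t) 1 N) p q) (Set.Ici 0) := by
  have hprod : ContinuousOn (fun t => prodDesc (fun i => W i t) 1 N) (Set.Ici 0) :=
    continuousOn_prodDesc fun i hi t ht =>
      (hW.hasDerivAt t ht i hi).continuousAt.continuousWithinAt
  exact ((contDiff_gradLoss A y (n := 0)).continuous.matrix_elem p q).comp_continuousOn hprod

theorem hasDerivAt_apply_self_neg_mul_prod_erase (hW : IsGradientFlow A y N α W)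
    (hA : ∀ i, (A i).IsDiag) (ht : 0 ≤ t) {j : ℕ} (hj : j ∈ Finset.Icc 1 N) (k : Fin d) :
    HasDerivAt (fun s => W j s k k)
      (-(gradLoss A y (prodDesc (fun i => W i t) 1 N) k k *
        ∏ i ∈ (Finset.Icc 1 N).erase j, W i t k k)) t := by
  rw [← flowField_apply_self (fun i hi => hW.isDiag hA ht hi) hj]
  exact hasDerivAt_matrix_iff.1 (hW.hasDerivAt t ht j hj) k k

theorem apply_self_eq (hW : IsGradientFlow A y N α W) (hA : ∀ i, (A i).IsDiag) (ht : 0 ≤ t)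
    {i j : ℕ} (hi : i ∈ Finset.Icc 1 N) (hj : j ∈ Finset.Icc 1 N) (k : Fin d) :
    W i t k k = W j t k k :=
  eq_of_hasDerivAt_neg_mul_prod_erase (w := fun i t => W i t k k)
    (hW.continuousOn_gradLoss_apply k k)
    (fun _ ht _ hi => hW.hasDerivAt_apply_self_neg_mul_prod_erase hA ht hi k)
    hi hj (by simp only [hW.init i hi, hW.init j hj]) ht

theorem prodDesc_apply_self (hW : IsGradientFlow A y N α W) (hA : ∀ i, (A i).IsDiag)
    (ht : 0 ≤ t) {j : ℕ} (hj : j ∈ Finset.Icc 1 N) (k : Fin d) :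
    prodDesc (fun i => W i t) 1 N k k = W j t k k ^ N := by
  rw [prodDesc_of_isDiag fun i hi => hW.isDiag hA ht hi, diagonal_apply_eq,
    Finset.prod_eq_pow_card fun i hi => hW.apply_self_eq hA ht hi hj k, Nat.card_Icc,
    Nat.add_sub_cancel]

theorem hasDerivAt_apply_self_neg_mul_pow (hW : IsGradientFlow A y N α W) (hA : ∀ i, (A i).IsDiag)
    (ht : 0 ≤ t) {j : ℕ} (hj : j ∈ Finset.Icc 1 N) (k : Fin d) :
    HasDerivAt (fun s => W j s k k)
      (-(gradLoss A y (prodDesc (fun i => W i t) 1 N) k k * W j t k k ^ (N - 1))) t := by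
  convert! hW.hasDerivAt_apply_self_neg_mul_prod_erase hA ht hj k using 3
  rw [Finset.prod_eq_pow_card fun i hi => hW.apply_self_eq hA ht (Finset.mem_of_mem_erase hi) hj k,
    Finset.card_erase_of_mem hj, Nat.card_Icc, Nat.add_sub_cancel]

theorem apply_self_pos (hW : IsGradientFlow A y N α W) (hA : ∀ i, (A i).IsDiag) (hN : 2 ≤ N)
    (hα : 0 < α) (ht : 0 ≤ t) {j : ℕ} (hj : j ∈ Finset.Icc 1 N) (k : Fin d) : 0 < W j t k k := by
  obtain ⟨n, rfl⟩ := Nat.exists_eq_add_of_le' hN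
  have hcont : ContinuousOn (fun t => W j t k k) (Set.Ici 0) := fun t ht =>
    (hW.hasDerivAt_apply_self_neg_mul_prod_erase hA ht hj k).continuousAt.continuousWithinAt
  rw [eq_mul_exp_integral_of_hasDerivAt (h := fun t => W j t k k)
    (c := fun t => -(gradLoss A y (prodDesc (fun i => W i t) 1 (n + 2)) k k * W j t k k ^ n))
    ((hW.continuousOn_gradLoss_apply k k).mul (hcont.pow n)).neg (fun s hs => ?_) ht]
  · rw [hW.init j hj, Matrix.smul_apply, one_apply_eq, smul_eq_mul, mul_one]
    exact mul_pos hα (Real.exp_pos _)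
  · convert! hW.hasDerivAt_apply_self_neg_mul_pow hA hs hj k using 1
    rw [show n + 2 - 1 = n + 1 from rfl, pow_succ]
    ring

theorem prodDesc_apply_self_pos (hW : IsGradientFlow A y N α W) (hA : ∀ i, (A i).IsDiag)
    (hN : 2 ≤ N) (hα : 0 < α) (ht : 0 ≤ t) (k : Fin d) :
    0 < prodDesc (fun i => W i t) 1 N k k := by
  have hmem : 1 ∈ Finset.Icc 1 N := Finset.mem_Icc.2 ⟨le_rfl, by omega⟩
  rw [hW.prodDesc_apply_self hA ht hmem]
  exact pow_pos (hW.apply_self_pos hA hN hα ht hmem k) N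

theorem sum_div_rpow_pow_mul_eq_trace (hW : IsGradientFlow A y N α W) (hA : ∀ i, (A i).IsDiag)
    (hN : 2 ≤ N) (hα : 0 < α) (ht : 0 ≤ t) {Δ : Matrix (Fin d) (Fin d) ℝ}
    (hΔ : ∀ i, ((A i)ᵀ * Δ).trace = 0) :
    ∑ k, (α / prodDesc (fun i => W i t) 1 N k k ^ (N : ℝ)⁻¹) ^ (N - 2) * Δ k k = Δ.trace := by
  have hmem : 1 ∈ Finset.Icc 1 N := Finset.mem_Icc.2 ⟨le_rfl, by omega⟩
  have hpos := fun s (hs : 0 ≤ s) k => hW.apply_self_pos hA hN hα hs hmem k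
  have hconst := sum_inv_pow_mul_eq_of_hasDerivAt (n := N - 2) (u := fun k s => W 1 s k k) hpos
    (fun s hs k => by
      simpa only [show N - 2 + 1 = N - 1 by omega] using
        hW.hasDerivAt_apply_self_neg_mul_pow hA hs hmem k)
    (fun s _ => sum_gradLoss_apply_self_mul_eq_zero hA hΔ y _) ht
  calc ∑ k, (α / prodDesc (fun i => W i t) 1 N k k ^ (N : ℝ)⁻¹) ^ (N - 2) * Δ k k
      = α ^ (N - 2) * ∑ k, (W 1 t k k ^ (N - 2))⁻¹ * Δ k k := by
        rw [Finset.mul_sum]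
        refine Finset.sum_congr rfl fun k _ => ?_
        rw [hW.prodDesc_apply_self hA ht hmem,
          Real.pow_rpow_inv_natCast (hpos t ht k).le (by omega), div_pow, div_eq_mul_inv, mul_assoc]
    _ = α ^ (N - 2) * ∑ k, (α ^ (N - 2))⁻¹ * Δ k k := by
        simp only [hconst, hW.init 1 hmem, Matrix.smul_apply, one_apply_eq, smul_eq_mul, mul_one]
    _ = Δ.trace := by
        rw [← Finset.mul_sum, mul_inv_cancel_left₀ (pow_pos hα _).ne']
        rfl

theorem trace_le_trace_add (hW : IsGradientFlow A y N α W) (hA : ∀ i, (A i).IsDiag) (hN : 2 ≤ N)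
    (hα : 0 < α) (ht : 0 ≤ t) {M M' : Matrix (Fin d) (Fin d) ℝ} (hM' : ∀ k, 0 ≤ M' k k)
    (hMM' : ∀ i, ((A i)ᵀ * M).trace = ((A i)ᵀ * M').trace) :
    M.trace ≤ M'.trace +
      ∑ k, (α / prodDesc (fun i => W i t) 1 N k k ^ (N : ℝ)⁻¹) ^ (N - 2) * M k k := by
  have hsum := hW.sum_div_rpow_pow_mul_eq_trace hA hN hα ht (Δ := M' - M) fun i => by
    rw [mul_sub, trace_sub, hMM' i, sub_self]
  have hnonneg : 0 ≤ ∑ k, (α / prodDesc (fun i => W i t) 1 N k k ^ (N : ℝ)⁻¹) ^ (N - 2) * M' k k :=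
    Finset.sum_nonneg fun k _ => mul_nonneg (pow_nonneg (div_nonneg hα.le
      (Real.rpow_nonneg (hW.prodDesc_apply_self_pos hA hN hα ht k).le _)) _) (hM' k)
  simp only [Matrix.sub_apply, mul_sub, Finset.sum_sub_distrib, trace_sub] at hsum
  linarith

end IsGradientFlow

end GradientFlow

section ImplicitBias

variable {d m N : ℕ} {A : Fin m → Matrix (Fin d) (Fin d) ℝ} {y : Fin m → ℝ}
  {W : ℝ → ℕ → ℝ → Matrix (Fin d) (Fin d) ℝ} {Winf : ℝ → Matrix (Fin d) (Fin d) ℝ}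
  {Wbar W' : Matrix (Fin d) (Fin d) ℝ}

theorem trace_le_trace_of_isGradientFlow_of_isDiag (hN : 3 ≤ N) (hA : ∀ i, (A i).IsDiag)
    (hW : ∀ α, 0 < α → IsGradientFlow A y N α (W α))
    (hWinf : ∀ α, 0 < α → Tendsto (fun t => prodDesc (fun i => W α i t) 1 N) atTop (𝓝 (Winf α)))
    (hWbar : Tendsto Winf (𝓝[>] 0) (𝓝 Wbar)) (hW' : ∀ k, 0 ≤ W' k k)
    (hfeas : ∀ i, ((A i)ᵀ * Wbar).trace = ((A i)ᵀ * W').trace) : Wbar.trace ≤ W'.trace := by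
  have hentry : ∀ {l : Filter ℝ} {F : ℝ → Matrix (Fin d) (Fin d) ℝ} {M} k, Tendsto F l (𝓝 M) →
      Tendsto (fun x => F x k k) l (𝓝 (M k k)) := fun k h =>
    ((continuous_id.matrix_elem k k).tendsto _).comp h
  have hWinf_nonneg : ∀ α, 0 < α → ∀ k, 0 ≤ Winf α k k := fun α hα k =>
    ge_of_tendsto (hentry k (hWinf α hα)) <| (eventually_ge_atTop 0).mono fun t ht =>
      ((hW α hα).prodDesc_apply_self_pos hA (by omega) hα ht k).le
  have hWbar_nonneg : ∀ k, 0 ≤ Wbar k k := fun k =>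
    ge_of_tendsto (hentry k hWbar) (eventually_mem_nhdsWithin.mono fun α hα => hWinf_nonneg α hα k)
  have hpos : ∀ k, ∀ᶠ α in 𝓝[>] (0 : ℝ), Wbar k k = 0 ∨ 0 < Winf α k k := fun k => by
    obtain h | h := (hWbar_nonneg k).eq_or_lt
    · exact .of_forall fun _ => .inl h.symm
    · exact ((hentry k hWbar).eventually_const_lt h).mono fun _ => .inr
  have hle : ∀ᶠ α in 𝓝[>] (0 : ℝ), Wbar.trace ≤ W'.trace +
      ∑ k, (α / Winf α k k ^ (N : ℝ)⁻¹) ^ (N - 2) * Wbar k k := by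
    filter_upwards [eventually_all.2 hpos, self_mem_nhdsWithin] with α hα hα0
    exact ge_of_tendsto (tendsto_const_nhds.add (tendsto_finsetSum _ fun k _ =>
      tendsto_div_rpow_pow_mul (N - 2) tendsto_const_nhds (hentry k (hWinf α hα0)) (hα k)))
      ((eventually_ge_atTop 0).mono fun t ht =>
        (hW α hα0).trace_le_trace_add hA (by omega) hα0 ht hW' hfeas)
  have hlim : Tendsto (fun α => ∑ k, (α / Winf α k k ^ (N : ℝ)⁻¹) ^ (N - 2) * Wbar k k)
      (𝓝[>] 0) (𝓝 0) := by
    have := tendsto_finsetSum Finset.univ fun k _ =>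
      tendsto_div_rpow_pow_mul (e := (N : ℝ)⁻¹) (N - 2) (tendsto_id'.2 nhdsWithin_le_nhds)
        (hentry k hWbar) ((hWbar_nonneg k).eq_or_lt.imp_left Eq.symm)
    simpa only [id, zero_div, zero_pow (show N - 2 ≠ 0 by omega), zero_mul, Finset.sum_const_zero]
      using this
  simpa only [add_zero] using ge_of_tendsto (tendsto_const_nhds.add hlim) hle

theorem stmt1_general (hN : 3 ≤ N) (hA_symm : ∀ i, (A i).IsSymm)
    (hA_comm : ∀ i j, Commute (A i) (A j)) (hW : ∀ α, 0 < α → IsGradientFlow A y N α (W α))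
    (hWinf : ∀ α, 0 < α → Tendsto (fun t => prodDesc (fun i => W α i t) 1 N) atTop (𝓝 (Winf α)))
    (hWbar : Tendsto Winf (𝓝[>] 0) (𝓝 Wbar)) (hW' : W'.PosSemidef)
    (hfeas : ∀ i, ((A i)ᵀ * Wbar).trace = ((A i)ᵀ * W').trace) : Wbar.trace ≤ W'.trace := by
  obtain ⟨U, hU⟩ := exists_unitary_forall_isDiag
    (fun i => (conjTranspose_eq_transpose_of_trivial _).trans (hA_symm i)) hA_comm
  let φ := Unitary.conjStarAlgAut ℝ (Matrix (Fin d) (Fin d) ℝ) U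
  have hφ : Continuous φ := φ.toAlgEquiv.toLinearMap.continuous_of_finiteDimensional
  have hφW' : (φ W').PosSemidef := hW'.mul_mul_conjTranspose_same _
  rw [← Matrix.trace_map φ Wbar, ← Matrix.trace_map φ W']
  refine trace_le_trace_of_isGradientFlow_of_isDiag hN hU (fun α hα => (hW α hα).map φ)
    (fun α hα => ?_) ((hφ.tendsto _).comp hWbar) (fun _ => hφW'.diag_nonneg) fun i => ?_
  · simpa only [prodDesc_map φ, Function.comp_def] using (hφ.tendsto _).comp (hWinf α hα)
  · exact (trace_map_transpose_mul_map φ ..).trans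
      ((hfeas i).trans (trace_map_transpose_mul_map φ ..).symm)

end ImplicitBias

/-- Gradient flow on a depth-`N` matrix factorization (`N ≥ 3`) initialized at `α·I`
(for commuting, symmetric, linearly independent measurement matrices): the limit of the
product matrix, as `t → ∞` and then `α → 0⁺`, if it exists, is PSD and feasible, is a
feasible PSD matrix of minimal nuclear norm (= trace, for PSD matrices). -/
theorem stmt1 {d m : ℕ} (N : ℕ) (hN : 3 ≤ N)
    (A : Fin m → Matrix (Fin d) (Fin d) ℝ) (y : Fin m → ℝ)
    (hA_symm : ∀ i, (A i).IsSymm)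
    (hA_comm : ∀ i j, Commute (A i) (A j))
    (hA_li : LinearIndependent ℝ A)
    (W : ℝ → ℕ → ℝ → Matrix (Fin d) (Fin d) ℝ)
    (hW_init : ∀ α : ℝ, 0 < α → ∀ j, 1 ≤ j → j ≤ N →
      W α j 0 = α • (1 : Matrix (Fin d) (Fin d) ℝ))
    (hW_flow : ∀ α : ℝ, 0 < α → ∀ t : ℝ, 0 ≤ t → ∀ j, 1 ≤ j → j ≤ N → ∀ p q : Fin d,
      HasDerivAt (fun s => W α j s p q)
        ((-((prodDesc (fun i => W α i t) (j + 1) N)ᵀ *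
            gradLoss A y (prodDesc (fun i => W α i t) 1 N) *
            (prodDesc (fun i => W α i t) 1 (j - 1))ᵀ)) p q) t)
    (Winf : ℝ → Matrix (Fin d) (Fin d) ℝ)
    (hWinf : ∀ α : ℝ, 0 < α →
      Tendsto (fun t => prodDesc (fun i => W α i t) 1 N) atTop (nhds (Winf α)))
    (Wbar : Matrix (Fin d) (Fin d) ℝ)
    (hWbar : Tendsto Winf (nhdsWithin 0 (Set.Ioi 0)) (nhds Wbar))
    (hWbar_psd : Wbar.PosSemidef)
    (hWbar_feas : ∀ i, ((A i)ᵀ * Wbar).trace = y i) :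
    ∀ W' : Matrix (Fin d) (Fin d) ℝ, W'.PosSemidef →
      (∀ i, ((A i)ᵀ * W').trace = y i) → Wbar.trace ≤ W'.trace := by
  intro W' hW'_psd hW'_feas
  exact stmt1_general hN hA_symm hA_comm
    (fun α hα =>
      ⟨fun j hj => (Finset.mem_Icc.1 hj).elim (hW_init α hα j), fun t ht j hj =>
        hasDerivAt_matrix_iff.2 ((Finset.mem_Icc.1 hj).elim (hW_flow α hα t ht j))⟩)
    hWinf hWbar hW'_psd fun i => (hWbar_feas i).trans (hW'_feas i).symm
end

section
/- Let ℓ : ℝ^{d×d'} → ℝ be real-analytic, let N ≥ 1 and d = d_N, d₁, …, d_{N−1}, d' = d₀ be positive integers, and let W_j : I → ℝ^{d_j×d_{j−1}} (j = 1, …, N) be differentiable maps on an open interval I satisfying, for all t ∈ I and every j, the gradient-flow equations W_j′(t) = −(W_N(t)⋯W_{j+1}(t))ᵀ · ∇ℓ(W(t)) · (W_{j−1}(t)⋯W₁(t))ᵀ, where W(t) := W_N(t)·W_{N−1}(t)⋯W₁(t) and empty products are the identity. Then the product matrix admits an analytic singular value decomposition: with k := min(d, d'), there exist real-analytic maps U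 : I → ℝ^{d×k}, σ : I → ℝ^k, V : I → ℝ^{d'×k} such that for every t ∈ I, W(t) = U(t)·diag(σ(t))·V(t)ᵀ, and the columns of U(t) and of V(t) are orthonormal (the diagonal entries σ_r(t) may be negative and may appear in any order). -/
/-!
The gradient flow is an analytic differential equation on the space of layers, so the layers, and
with them the product `A = W_N ⋯ W₁`, are analytic in time. It remains to find an analytic singular
value decomposition of an analytic curve `A` on an interval.

The eigenvectors of `Aᵀ A` come from Rellich's theorem. Locally, an analytic symmetric `H` has
analytic eigenframes; the connection matrix of one that does not rotate inside the eigenspaces is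
determined by `H` and `H'`, so the local connection matrices glue to an analytic skew `Ω` on `I`. In
the frame transported by `Ω`, the matrix `H` commutes with its derivative, and then a constant
orthogonal matrix diagonalizes it.

If `V` diagonalizes `Aᵀ A`, the columns of `A V` are pairwise orthogonal. Rellich's theorem for
`w wᵀ` writes such a column `w` as an analytic multiple of an analytic unit vector, and applied to
the projection `T Tᵀ` it completes an orthonormal family `T` where columns vanish identically.
-/

open Matrix Filter Topology

attribute [local instance] Matrix.normedAddCommGroup Matrix.normedSpace

/-- `chainProd dims Wt lo hi = Wt hi * Wt (hi − 1) * ⋯ * Wt (lo + 1)`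
(the identity matrix when `hi = lo`; junk when `hi < lo`, which is never used). -/
noncomputable def chainProd (dims : ℕ → ℕ)
    (Wt : (j : ℕ) → Matrix (Fin (dims j)) (Fin (dims (j - 1))) ℝ) (lo : ℕ) :
    (hi : ℕ) → Matrix (Fin (dims hi)) (Fin (dims lo)) ℝ
  | 0 => if h : (0 : ℕ) = lo then by rw [h]; exact 1 else 0
  | n + 1 =>
      if h : n + 1 = lo then by rw [h]; exact 1
      else (show Matrix (Fin (dims (n + 1))) (Fin (dims n)) ℝ from Wt (n + 1)) *
        chainProd dims Wt lo n

section Superposition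

variable {𝕜 E G K : Type*} [NontriviallyNormedField 𝕜] [NormedAddCommGroup E] [NormedSpace 𝕜 E]
  [NormedAddCommGroup G] [NormedSpace 𝕜 G] [TopologicalSpace K] [CompactSpace K]

/-- The multilinear map on `C(K, E)` obtained by applying a continuous multilinear map pointwise.
These are the Taylor coefficients of superposition operators. -/
noncomputable def pointwiseMultilinear {n : ℕ} (m : E [×n]→L[𝕜] G) :
    C(K, E) [×n]→L[𝕜] C(K, G) :=
  MultilinearMap.mkContinuous
    { toFun := fun y => ⟨fun τ => m fun i => y i τ,
        m.cont.comp (continuous_pi fun i => (y i).continuous)⟩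
      map_update_add' := fun y i a b => by
        ext τ
        simp [Function.apply_update (fun _ (g : C(K, E)) => g τ)]
      map_update_smul' := fun y i c a => by
        ext τ
        simp [Function.apply_update (fun _ (g : C(K, E)) => g τ)] } ‖m‖
    fun y => by
      rw [ContinuousMap.norm_le _ (by positivity)]
      intro τ
      refine (m.le_opNorm _).trans ?_
      gcongr with i
      exact (y i).norm_coe_le_norm τ

theorem norm_pointwiseMultilinear_le {n : ℕ} (m : E [×n]→L[𝕜] G) :
    ‖(pointwiseMultilinear m : C(K, E) [×n]→L[𝕜] C(K, G))‖ ≤ ‖m‖ :=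
  MultilinearMap.mkContinuous_norm_le _ (norm_nonneg _) _

theorem exists_analyticAt_superposition [CompleteSpace G] {F : E → G} {x₀ : E}
    (hF : AnalyticAt 𝕜 F x₀) :
    ∃ N : C(K, E) → C(K, G), AnalyticAt 𝕜 N 0 ∧
      ∀ᶠ y in 𝓝 (0 : C(K, E)), ∀ τ, N y τ = F (x₀ + y τ) := by
  obtain ⟨p, r, hp⟩ := hF
  let P : FormalMultilinearSeries 𝕜 C(K, E) C(K, G) := fun n => pointwiseMultilinear (p n)
  have hrad : p.radius ≤ P.radius := by
    refine ENNReal.le_of_forall_nnreal_lt fun s hs => ?_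
    obtain ⟨C, -, hC⟩ := p.norm_mul_pow_le_of_lt_radius hs
    refine P.le_radius_of_bound C fun n => le_trans ?_ (hC n)
    gcongr
    exact norm_pointwiseMultilinear_le (p n)
  have hP := P.hasFPowerSeriesOnBall ((hp.r_pos.trans_le hp.r_le).trans_le hrad)
  refine ⟨P.sum, hP.analyticAt, ?_⟩
  filter_upwards [Metric.eball_mem_nhds (0 : C(K, E)) hp.r_pos] with y hy τ
  have hsum : HasSum (fun n => P n fun _ => y) (P.sum y) := by
    simpa using hP.hasSum (Metric.eball_subset_eball (hp.r_le.trans hrad) hy)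
  have hyτ : y τ ∈ Metric.eball (0 : E) r := by
    rw [Metric.mem_eball, edist_zero_right] at hy ⊢
    exact (enorm_le_iff_norm_le.2 (y.norm_coe_le_norm τ)).trans_lt hy
  exact (hsum.mapL (ContinuousMap.evalCLM 𝕜 τ)).unique (hp.hasSum hyτ)

end Superposition

section ImplicitFunction

variable {𝕜 E F G : Type*} [RCLike 𝕜]
  [NormedAddCommGroup E] [NormedSpace 𝕜 E] [CompleteSpace E]
  [NormedAddCommGroup F] [NormedSpace 𝕜 F] [CompleteSpace F]
  [NormedAddCommGroup G] [NormedSpace 𝕜 G] [CompleteSpace G]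

theorem exists_analyticAt_implicit {f : E × F → G} {a : E} {b : F}
    (hf : AnalyticAt 𝕜 f (a, b)) (L : F ≃L[𝕜] G)
    (hL : HasFDerivAt (fun y => f (a, y)) (L : F →L[𝕜] G) b) :
    ∃ ψ : E → F, AnalyticAt 𝕜 ψ a ∧ ψ a = b ∧
      ∀ᶠ v in 𝓝 (a, b), f v = f (a, b) ↔ ψ v.1 = v.2 := by
  have hc : ContDiffAt 𝕜 ⊤ f (a, b) := hf.contDiffAt
  have hinr : HasFDerivAt (fun y => f (a, y)) (fderiv 𝕜 f (a, b) ∘L .inr 𝕜 E F) b :=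
    hf.differentiableAt.hasFDerivAt.comp b (hasFDerivAt_prodMk_right a b)
  have hinv : (fderiv 𝕜 f (a, b) ∘L .inr 𝕜 E F).IsInvertible := ⟨L, hL.unique hinr⟩
  have htop : (⊤ : WithTop ℕ∞) ≠ 0 := by simp
  exact ⟨hc.implicitFunction htop hinv, (hc.contDiffAt_implicitFunction htop hinv).analyticAt,
    hc.implicitFunction_apply_self htop hinv, hc.eventually_apply_eq_iff_implicitFunction htop hinv⟩

end ImplicitFunction

theorem exists_continuousMap_eventuallyEq {Y : Type*} [TopologicalSpace Y] {x : ℝ → Y} {t₀ : ℝ}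
    (hx : ∀ᶠ t in 𝓝 t₀, ContinuousAt x t) : ∃ x' : C(ℝ, Y), x' =ᶠ[𝓝 t₀] x := by
  obtain ⟨ε, hε, hball⟩ := Metric.nhds_basis_closedBall.eventually_iff.1 hx
  rw [Real.closedBall_eq_Icc] at hball
  have hle : t₀ - ε ≤ t₀ + ε := by linarith
  have hcont : ContinuousOn x (Set.Icc (t₀ - ε) (t₀ + ε)) := fun t ht =>
    (hball ht).continuousWithinAt
  refine ⟨⟨Set.IccExtend hle (Set.domRestrict _ x), hcont.domRestrict.Icc_extend'⟩, ?_⟩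
  filter_upwards [Icc_mem_nhds (sub_lt_self t₀ hε) (lt_add_of_pos_right t₀ hε)] with t ht
  exact Set.IccExtend_of_mem hle (Set.domRestrict _ x) ht

section RescaledIncrement

variable {E : Type*} [NormedAddCommGroup E]

/-- The rescaled increments `s ↦ (τ ↦ x (t₀ + s τ) - x t₀)` of a curve, as a curve in
`C([0, 1], E)`. -/
def rescaledIncrement (x : C(ℝ, E)) (t₀ : ℝ) : C(ℝ, C(unitInterval, E)) :=
  ContinuousMap.curry ⟨fun p : ℝ × unitInterval => x (t₀ + p.1 * p.2) - x t₀, by fun_prop⟩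

theorem rescaledIncrement_apply (x : C(ℝ, E)) (t₀ s : ℝ) (τ : unitInterval) :
    rescaledIncrement x t₀ s τ = x (t₀ + s * τ) - x t₀ := rfl

theorem rescaledIncrement_zero (x : C(ℝ, E)) (t₀ : ℝ) : rescaledIncrement x t₀ 0 = 0 := by
  ext τ
  simp [rescaledIncrement_apply]

end RescaledIncrement

section AnalyticODE

variable {E : Type*} [NormedAddCommGroup E] [NormedSpace ℝ E]

variable (E) in
/-- The operator `y ↦ (τ ↦ ∫₀^τ y)` on `C([0, 1], E)`. -/
noncomputable def primitiveCLM : C(unitInterval, E) →L[ℝ] C(unitInterval, E) :=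
  LinearMap.mkContinuous
    { toFun := fun y => ⟨fun τ => ∫ r in (0 : ℝ)..τ, y (Set.projIcc 0 1 zero_le_one r),
        (intervalIntegral.continuous_primitive (fun _ _ => Continuous.intervalIntegrable
          (by fun_prop) _ _) 0).comp continuous_subtype_val⟩
      map_add' := fun y z => by
        ext τ
        exact intervalIntegral.integral_add (Continuous.intervalIntegrable (by fun_prop) _ _)
          (Continuous.intervalIntegrable (by fun_prop) _ _)
      map_smul' := fun c y => by
        ext τ
        exact intervalIntegral.integral_smul _ _ } 1
    fun y => by
      rw [ContinuousMap.norm_le _ (by positivity)]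
      intro τ
      refine (intervalIntegral.norm_integral_le_of_norm_le_const (C := ‖y‖)
        fun r _ => y.norm_coe_le_norm _).trans ?_
      rw [sub_zero, abs_of_nonneg τ.2.1, one_mul]
      exact mul_le_of_le_one_right (norm_nonneg _) τ.2.2

theorem primitiveCLM_apply (y : C(unitInterval, E)) (τ : unitInterval) :
    primitiveCLM E y τ = ∫ r in (0 : ℝ)..τ, y (Set.projIcc 0 1 zero_le_one r) := rfl

theorem eq_smul_primitiveCLM [CompleteSpace E] {F : E → E} {x : ℝ → E} {t₀ s : ℝ}
    (hx : ∀ r ∈ unitInterval, HasDerivAt x (F (x (t₀ + s * r))) (t₀ + s * r))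
    {y z : C(unitInterval, E)} (hy : ∀ τ : unitInterval, y τ = x (t₀ + s * τ) - x t₀)
    (hz : ∀ τ, z τ = F (x t₀ + y τ)) :
    y = s • primitiveCLM E z := by
  have hz' : ∀ r ∈ unitInterval,
      z (Set.projIcc 0 1 zero_le_one r) = F (x (t₀ + s * r)) := by
    intro r hr
    rw [hz, hy, Set.projIcc_of_mem zero_le_one hr, add_sub_cancel]
  ext τ
  have hτ : Set.uIcc 0 (τ : ℝ) ⊆ unitInterval := by
    rw [Set.uIcc_of_le τ.2.1]
    exact Set.Icc_subset_Icc_right τ.2.2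
  have hderiv : ∀ r ∈ Set.uIcc 0 (τ : ℝ), HasDerivAt (fun r => x (t₀ + s * r))
      (s • z (Set.projIcc 0 1 zero_le_one r)) r := by
    intro r hr
    rw [hz' r (hτ hr)]
    refine (hx r (hτ hr)).scomp r ?_
    simpa using ((hasDerivAt_id r).const_mul s).const_add t₀
  have hftc := intervalIntegral.integral_eq_sub_of_hasDerivAt hderiv
    (Continuous.intervalIntegrable (by fun_prop) _ _)
  rw [intervalIntegral.integral_smul, mul_zero, add_zero] at hftc
  rw [hy, ContinuousMap.smul_apply, primitiveCLM_apply, hftc]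

/-- The substitution `t = t₀ + s τ` with `τ ∈ [0, 1]` turns the equation into a fixed-point problem
`y = s • ∫ F (x t₀ + y)` in `C([0, 1], E)`, to which the analytic implicit function theorem applies
at `s = 0`. -/
theorem analyticAt_of_eventually_hasDerivAt [CompleteSpace E] {F : E → E} {x : ℝ → E} {t₀ : ℝ}
    (hF : AnalyticAt ℝ F (x t₀)) (hx : ∀ᶠ t in 𝓝 t₀, HasDerivAt x (F (x t)) t) :
    AnalyticAt ℝ x t₀ := by
  obtain ⟨x', hx'⟩ := exists_continuousMap_eventuallyEq (hx.mono fun t h => h.continuousAt)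
  obtain ⟨N, hN, hNF⟩ := exists_analyticAt_superposition (K := unitInterval) hF
  let f : ℝ × C(unitInterval, E) → C(unitInterval, E) := fun v => v.2 - v.1 • primitiveCLM E (N v.2)
  have hf : AnalyticAt ℝ f (0, 0) :=
    analyticAt_snd.sub (analyticAt_fst.smul (((primitiveCLM E).analyticAt _).comp
      (hN.comp_of_eq analyticAt_snd rfl)))
  have hf₂ : HasFDerivAt (fun y => f (0, y))
      (ContinuousLinearEquiv.refl ℝ C(unitInterval, E) : C(unitInterval, E) →L[ℝ] _) 0 := by
    exact (hasFDerivAt_id (𝕜 := ℝ) _).congr_of_eventuallyEq (.of_forall fun y => by simp [f])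
  obtain ⟨ψ, hψ, -, hψ_iff⟩ := exists_analyticAt_implicit hf _ hf₂
  let y := rescaledIncrement x' t₀
  have hy : Tendsto y (𝓝 0) (𝓝 0) := by
    simpa [y, rescaledIncrement_zero] using y.continuous.tendsto 0
  have hsol : ∀ᶠ t in 𝓝 t₀, HasDerivAt x' (F (x' t)) t := by
    filter_upwards [hx, hx'.eventuallyEq_nhds] with t ht hxt
    exact hxt.eq_of_nhds ▸ ht.congr_of_eventuallyEq hxt
  obtain ⟨ε, hε, hball⟩ := Metric.eventually_nhds_iff.1 hsol
  have hψy : ∀ᶠ s in 𝓝 0, ψ s = y s := by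
    filter_upwards [(tendsto_id.prodMk_nhds hy).eventually hψ_iff, hy.eventually hNF,
      Metric.ball_mem_nhds 0 hε] with s hs hNs hsε
    refine hs.1 (sub_eq_zero.2 (eq_smul_primitiveCLM (fun r hr => hball ?_)
      (rescaledIncrement_apply x' t₀ s) (hx'.eq_of_nhds ▸ hNs)) |>.trans (by simp [f]))
    rw [mem_ball_zero_iff, Real.norm_eq_abs] at hsε
    rw [Real.dist_eq, add_sub_cancel_left, abs_mul, abs_of_nonneg hr.1]
    exact (mul_le_of_le_one_right (abs_nonneg _) hr.2).trans_lt hsε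
  have hψ₁ : AnalyticAt ℝ (fun t => x t₀ + ψ (t - t₀) 1) t₀ := by
    have hψ' : AnalyticAt ℝ (fun t => ψ (t - t₀)) t₀ :=
      hψ.comp_of_eq (analyticAt_id.fun_sub analyticAt_const) (sub_self t₀)
    let ev : C(unitInterval, E) →L[ℝ] E := ContinuousMap.evalCLM ℝ 1
    exact analyticAt_const.add ((ev.analyticAt _).comp hψ')
  refine hψ₁.congr ?_
  have hsub : Tendsto (fun t => t - t₀) (𝓝 t₀) (𝓝 0) := by
    simpa using (continuous_sub_right t₀).tendsto t₀
  filter_upwards [hsub.eventually hψy, hx'] with t ht hxt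
  simp [ht, y, rescaledIncrement_apply, hxt, hx'.eq_of_nhds]

end AnalyticODE

section MatrixCalculus

variable {𝕜 E : Type*} [NontriviallyNormedField 𝕜] [NormedAddCommGroup E] [NormedSpace 𝕜 E] {x : E}
  {l m n o : Type*} [Fintype l] [Fintype m] [Fintype n] [Fintype o]

theorem analyticAt_matrix_iff {M : E → Matrix m n 𝕜} :
    AnalyticAt 𝕜 M x ↔ ∀ i j, AnalyticAt 𝕜 (fun y => M y i j) x :=
  (analyticAt_pi_iff (Fm := fun _ : m => n → 𝕜) (f := fun i y => M y i)).trans <|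
    forall_congr' fun i => analyticAt_pi_iff (Fm := fun _ : n => 𝕜) (f := fun j y => M y i j)

theorem analyticAt_matrix_mul {M : E → Matrix l m 𝕜} {N : E → Matrix m n 𝕜}
    (hM : AnalyticAt 𝕜 M x) (hN : AnalyticAt 𝕜 N x) : AnalyticAt 𝕜 (fun y => M y * N y) x := by
  rw [analyticAt_matrix_iff] at *
  intro i j
  simp only [Matrix.mul_apply]
  exact Finset.analyticAt_fun_sum _ fun k _ => (hM i k).mul (hN k j)

theorem analyticAt_matrix_transpose {M : E → Matrix m n 𝕜} (hM : AnalyticAt 𝕜 M x) :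
    AnalyticAt 𝕜 (fun y => (M y)ᵀ) x := by
  rw [analyticAt_matrix_iff] at *
  exact fun i j => hM j i

theorem analyticAt_matrix_submatrix {M : E → Matrix m n 𝕜} (hM : AnalyticAt 𝕜 M x)
    (f : l → m) (g : o → n) : AnalyticAt 𝕜 (fun y => (M y).submatrix f g) x := by
  rw [analyticAt_matrix_iff] at *
  exact fun i j => hM (f i) (g j)

theorem analyticAt_matrix_fromBlocks {A : E → Matrix l n 𝕜} {B : E → Matrix l o 𝕜}
    {C : E → Matrix m n 𝕜} {D : E → Matrix m o 𝕜} (hA : AnalyticAt 𝕜 A x)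
    (hB : AnalyticAt 𝕜 B x) (hC : AnalyticAt 𝕜 C x) (hD : AnalyticAt 𝕜 D x) :
    AnalyticAt 𝕜 (fun y => fromBlocks (A y) (B y) (C y) (D y)) x := by
  rw [analyticAt_matrix_iff] at *
  rintro (i | i) (j | j)
  exacts [hA i j, hB i j, hC i j, hD i j]

theorem analyticAt_matrix_det [DecidableEq m] {M : E → Matrix m m 𝕜} (hM : AnalyticAt 𝕜 M x) :
    AnalyticAt 𝕜 (fun y => (M y).det) x := by
  rw [analyticAt_matrix_iff] at hM
  simp only [Matrix.det_apply']
  exact Finset.analyticAt_fun_sum _ fun σ _ =>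
    analyticAt_const.mul (Finset.analyticAt_fun_prod _ fun i _ => hM _ _)

theorem analyticAt_matrix_inv [DecidableEq m] {M : E → Matrix m m 𝕜} (hM : AnalyticAt 𝕜 M x)
    (hx : (M x).det ≠ 0) : AnalyticAt 𝕜 (fun y => (M y)⁻¹) x := by
  rw [analyticAt_matrix_iff]
  intro i j
  simp only [Matrix.inv_def, Ring.inverse_eq_inv', Matrix.smul_apply, smul_eq_mul,
    Matrix.adjugate_apply]
  refine ((analyticAt_matrix_det hM).inv hx).mul (analyticAt_matrix_det ?_)
  rw [analyticAt_matrix_iff] at hM ⊢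
  intro a b
  by_cases h : a = j
  · subst h
    simpa only [Matrix.updateRow_self] using analyticAt_const
  · simpa only [Matrix.updateRow_ne h] using hM a b

end MatrixCalculus

section MatrixDeriv

variable {𝕜 : Type*} [NontriviallyNormedField 𝕜] {l m n : Type*} [Finite n] {t : 𝕜}

theorem hasDerivAt_matrix_iff_s7 {M : 𝕜 → Matrix l n 𝕜} {M' : Matrix l n 𝕜} :
    HasDerivAt M M' t ↔ ∀ i j, HasDerivAt (fun s => M s i j) (M' i j) t := by
  cases nonempty_fintype n
  exact (hasDerivAt_pi (E' := fun _ : l => n → 𝕜) (φ := M) (φ' := M')).trans <|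
    forall_congr' fun i => hasDerivAt_pi (E' := fun _ : n => 𝕜) (φ := fun s => M s i) (φ' := M' i)

theorem hasDerivAt_matrix_mul [Fintype m] {M : 𝕜 → Matrix l m 𝕜} {N : 𝕜 → Matrix m n 𝕜}
    {M' : Matrix l m 𝕜} {N' : Matrix m n 𝕜} (hM : HasDerivAt M M' t) (hN : HasDerivAt N N' t) :
    HasDerivAt (fun s => M s * N s) (M' * N t + M t * N') t := by
  rw [hasDerivAt_matrix_iff_s7] at *
  intro i j
  simp only [Matrix.mul_apply, Matrix.add_apply, ← Finset.sum_add_distrib]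
  exact HasDerivAt.fun_sum fun k _ => (hM i k).mul (hN k j)

theorem hasDerivAt_matrix_transpose [Finite l] {M : 𝕜 → Matrix l n 𝕜} {M' : Matrix l n 𝕜}
    (hM : HasDerivAt M M' t) : HasDerivAt (fun s => (M s)ᵀ) M'ᵀ t := by
  rw [hasDerivAt_matrix_iff_s7] at *
  exact fun i j => hM j i

end MatrixDeriv

section ImplicitFunctionFiniteDimensional

variable {𝕜 E F : Type*} [RCLike 𝕜]
  [NormedAddCommGroup E] [NormedSpace 𝕜 E] [CompleteSpace E]
  [NormedAddCommGroup F] [NormedSpace 𝕜 F] [FiniteDimensional 𝕜 F]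

theorem exists_analyticAt_implicit_of_hasLineDerivAt {f : E × F → F} {a : E} {b : F}
    (hf : AnalyticAt 𝕜 f (a, b)) {f' : F → F}
    (hf' : ∀ v, HasLineDerivAt 𝕜 (fun y => f (a, y)) (f' v) b v) (hinj : ∀ v, f' v = 0 → v = 0) :
    ∃ ψ : E → F, AnalyticAt 𝕜 ψ a ∧ ψ a = b ∧ ∀ᶠ x in 𝓝 a, f (x, ψ x) = f (a, b) := by
  have : CompleteSpace F := FiniteDimensional.complete 𝕜 F
  have hd : DifferentiableAt 𝕜 (fun y => f (a, y)) b :=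
    hf.differentiableAt.comp b (hasFDerivAt_prodMk_right a b).differentiableAt
  have hfd : ∀ v, fderiv 𝕜 (fun y => f (a, y)) b v = f' v := fun v =>
    (hd.hasFDerivAt.hasLineDerivAt v).unique (hf' v)
  let L : F ≃L[𝕜] F := (LinearEquiv.ofInjectiveEndo (fderiv 𝕜 (fun y => f (a, y)) b).toLinearMap
    ((injective_iff_map_eq_zero _).2 fun v hv =>
      hinj v ((hfd v).symm.trans hv))).toContinuousLinearEquiv
  obtain ⟨ψ, hψ, hψa, hψ_iff⟩ := exists_analyticAt_implicit hf L hd.hasFDerivAt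
  have hψ' : Tendsto (fun x => (x, ψ x)) (𝓝 a) (𝓝 (a, b)) :=
    tendsto_id.prodMk_nhds (hψa ▸ hψ.continuousAt.tendsto)
  exact ⟨ψ, hψ, hψa, (hψ'.eventually hψ_iff).mono fun x hx => hx.2 rfl⟩

end ImplicitFunctionFiniteDimensional

section Cayley

variable {ι : Type*} [Fintype ι] [DecidableEq ι]

/-- The Cayley transform `(1 + K) (1 - K)⁻¹`, with numerator and denominator multiplied by `1 + K`:
the denominator then is block-diagonal when `K` is block-antidiagonal. -/
noncomputable def cayley (K : Matrix ι ι ℝ) : Matrix ι ι ℝ :=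
  (1 + K) * (1 + K) * (1 - K * K)⁻¹

theorem isUnit_det_one_sub_mul_self {K : Matrix ι ι ℝ} (hK : Kᵀ = -K) :
    IsUnit (1 - K * K).det := by
  have hpos : (1 + Kᴴ * K).PosDef :=
    Matrix.PosDef.one.add_posSemidef (posSemidef_conjTranspose_mul_self K)
  rw [conjTranspose_eq_transpose_of_trivial, hK, neg_mul, ← sub_eq_add_neg] at hpos
  exact hpos.det_pos.ne'.isUnit

theorem one_sub_mul_self_transpose {K : Matrix ι ι ℝ} (hK : Kᵀ = -K) :
    (1 - K * K)ᵀ = 1 - K * K := by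
  simp [transpose_mul, hK]

theorem cayley_transpose_mul_mul_cayley {K : Matrix ι ι ℝ} (hK : Kᵀ = -K) (B : Matrix ι ι ℝ) :
    (cayley K)ᵀ * B * cayley K =
      (1 - K * K)⁻¹ * (((1 + K) * (1 + K))ᵀ * B * ((1 + K) * (1 + K))) * (1 - K * K)⁻¹ := by
  rw [cayley, transpose_mul _ (1 - K * K)⁻¹, transpose_nonsing_inv, one_sub_mul_self_transpose hK]
  simp only [mul_assoc]

theorem cayley_transpose_mul_self {K : Matrix ι ι ℝ} (hK : Kᵀ = -K) :
    (cayley K)ᵀ * cayley K = 1 := by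
  have hsq : ((1 + K) * (1 + K))ᵀ * 1 * ((1 + K) * (1 + K)) = (1 - K * K) * (1 - K * K) := by
    rw [transpose_mul, transpose_add, transpose_one, hK]
    noncomm_ring
  have hinv := isUnit_det_one_sub_mul_self hK
  calc (cayley K)ᵀ * cayley K = (cayley K)ᵀ * 1 * cayley K := by rw [mul_one]
    _ = ((1 - K * K)⁻¹ * (1 - K * K)) * ((1 - K * K) * (1 - K * K)⁻¹) := by
      rw [cayley_transpose_mul_mul_cayley hK, hsq]
      simp only [mul_assoc]
    _ = 1 := by rw [nonsing_inv_mul _ hinv, mul_nonsing_inv _ hinv, mul_one]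

theorem analyticAt_cayley {E : Type*} [NormedAddCommGroup E] [NormedSpace ℝ E]
    {K : E → Matrix ι ι ℝ} {x : E} (hK : AnalyticAt ℝ K x) (hx : (K x)ᵀ = -K x) :
    AnalyticAt ℝ (fun y => cayley (K y)) x := by
  have hK₁ : AnalyticAt ℝ (fun y => 1 + K y) x := analyticAt_const.add hK
  exact analyticAt_matrix_mul (analyticAt_matrix_mul hK₁ hK₁)
    (analyticAt_matrix_inv (analyticAt_const.sub (analyticAt_matrix_mul hK hK))
      (isUnit_det_one_sub_mul_self hx).ne_zero)

end Cayley

section BlockSplitting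

/-- The skew-symmetric matrix with off-diagonal blocks `-Xᵀ` and `X`. -/
def blockSkew {m n : Type*} (X : Matrix n m ℝ) : Matrix (m ⊕ n) (m ⊕ n) ℝ :=
  fromBlocks 0 (-Xᵀ) X 0

theorem blockSkew_transpose {m n : Type*} (X : Matrix n m ℝ) :
    (blockSkew X)ᵀ = -blockSkew X := by
  simp [blockSkew, fromBlocks_transpose, fromBlocks_neg]

theorem analyticAt_blockSkew {m n E : Type*} [Fintype m] [Fintype n] [NormedAddCommGroup E]
    [NormedSpace ℝ E] {X : E → Matrix n m ℝ} {x : E} (hX : AnalyticAt ℝ X x) :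
    AnalyticAt ℝ (fun y => blockSkew (X y)) x :=
  analyticAt_matrix_fromBlocks analyticAt_const (analyticAt_matrix_transpose hX).neg hX
    analyticAt_const

variable {m n : Type*} [Fintype m] [Fintype n] [DecidableEq m] [DecidableEq n]

theorem one_sub_blockSkew_mul_self (X : Matrix n m ℝ) :
    1 - blockSkew X * blockSkew X = fromBlocks (1 + Xᵀ * X) 0 0 (1 + X * Xᵀ) := by
  simp [blockSkew, fromBlocks_multiply, ← fromBlocks_one, sub_eq_add_neg, fromBlocks_neg,
    fromBlocks_add]

theorem one_add_blockSkew_mul_self (X : Matrix n m ℝ) :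
    (1 + blockSkew X) * (1 + blockSkew X) =
      fromBlocks (1 - Xᵀ * X) (-(Xᵀ + Xᵀ)) (X + X) (1 - X * Xᵀ) := by
  simp [blockSkew, fromBlocks_multiply, ← fromBlocks_one, fromBlocks_add, sub_eq_add_neg, add_comm]

theorem toBlocks₂₁_conj_one_add_blockSkew_mul_self (M : Matrix m m ℝ) (N : Matrix n n ℝ)
    (X : Matrix n m ℝ) :
    (((1 + blockSkew X) * (1 + blockSkew X))ᵀ * fromBlocks M 0 0 N *
      ((1 + blockSkew X) * (1 + blockSkew X))).toBlocks₂₁ =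
        (2 : ℝ) • (N * X - X * M) + (2 : ℝ) • (X * M * Xᵀ * X - X * Xᵀ * N * X) := by
  have hblock : (((1 + blockSkew X) * (1 + blockSkew X))ᵀ * fromBlocks M 0 0 N *
      ((1 + blockSkew X) * (1 + blockSkew X))).toBlocks₂₁ =
        -(X + X) * M * (1 - Xᵀ * X) + (1 - X * Xᵀ) * N * (X + X) := by
    rw [one_add_blockSkew_mul_self]
    simp only [fromBlocks_transpose, fromBlocks_multiply, toBlocks_fromBlocks₂₁, transpose_sub,
      transpose_neg, transpose_add, transpose_mul, transpose_transpose, transpose_one,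
      Matrix.mul_zero, add_zero, zero_add]
  rw [hblock]
  simp only [two_smul, Matrix.neg_mul, Matrix.mul_sub, Matrix.sub_mul, Matrix.mul_add,
    Matrix.add_mul, Matrix.mul_one, Matrix.one_mul, Matrix.mul_assoc]
  abel

theorem hasLineDerivAt_toBlocks₂₁_conj_one_add_blockSkew (M : Matrix m m ℝ) (N : Matrix n n ℝ)
    (X : Matrix n m ℝ) :
    HasLineDerivAt ℝ (fun X => (((1 + blockSkew X) * (1 + blockSkew X))ᵀ * fromBlocks M 0 0 N *
      ((1 + blockSkew X) * (1 + blockSkew X))).toBlocks₂₁) ((2 : ℝ) • (N * X - X * M)) 0 X := by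
  have hpoly : ∀ s : ℝ, (((1 + blockSkew (0 + s • X)) * (1 + blockSkew (0 + s • X)))ᵀ *
      fromBlocks M 0 0 N * ((1 + blockSkew (0 + s • X)) * (1 + blockSkew (0 + s • X)))).toBlocks₂₁ =
        s • (2 : ℝ) • (N * X - X * M) +
          s ^ 3 • (2 : ℝ) • (X * M * Xᵀ * X - X * Xᵀ * N * X) := by
    intro s
    rw [toBlocks₂₁_conj_one_add_blockSkew_mul_self, zero_add, transpose_smul]
    simp only [Matrix.smul_mul, Matrix.mul_smul, smul_smul, smul_sub]
    module
  unfold HasLineDerivAt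
  simp only [hpoly]
  simpa using ((hasDerivAt_id (0 : ℝ)).smul_const ((2 : ℝ) • (N * X - X * M))).fun_add
    ((hasDerivAt_pow 3 (0 : ℝ)).smul_const ((2 : ℝ) • (X * M * Xᵀ * X - X * Xᵀ * N * X)))

theorem eq_zero_of_diagonal_mul_sub_mul_diagonal_eq_zero {μ : m → ℝ} {ν : n → ℝ}
    (hμν : ∀ i j, μ i ≠ ν j) {X : Matrix n m ℝ} (hX : diagonal ν * X - X * diagonal μ = 0) :
    X = 0 := by
  ext j i
  have hji := congrFun₂ hX j i
  rw [Matrix.sub_apply, diagonal_mul, mul_diagonal, Matrix.zero_apply, mul_comm (ν j), ← mul_sub,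
    mul_eq_zero] at hji
  exact hji.resolve_right (sub_ne_zero.2 (hμν i j).symm)

theorem toBlocks₂₁_conj_cayley_blockSkew {B : Matrix (m ⊕ n) (m ⊕ n) ℝ} {X : Matrix n m ℝ}
    (hX : (((1 + blockSkew X) * (1 + blockSkew X))ᵀ * B *
      ((1 + blockSkew X) * (1 + blockSkew X))).toBlocks₂₁ = 0) :
    ((cayley (blockSkew X))ᵀ * B * cayley (blockSkew X)).toBlocks₂₁ = 0 := by
  have hinv := (isUnit_iff_isUnit_det _).2 (isUnit_det_one_sub_mul_self (blockSkew_transpose X))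
  rw [cayley_transpose_mul_mul_cayley (blockSkew_transpose X), one_sub_blockSkew_mul_self]
  rw [one_sub_blockSkew_mul_self, isUnit_fromBlocks_zero₂₁] at hinv
  rw [inv_fromBlocks_zero₂₁_of_isUnit_iff _ _ _ (iff_of_true hinv.1 hinv.2),
    ← fromBlocks_toBlocks (_ * B * _), hX]
  simp [fromBlocks_multiply]

/-- The implicit function theorem supplies an `X` for which conjugation by `(1 + blockSkew X)²`
annihilates the lower left block; the Cayley transform differs from this matrix by a block-diagonal
normalization. -/
theorem exists_analyticAt_block_splitting {B : ℝ → Matrix (m ⊕ n) (m ⊕ n) ℝ} {t₀ : ℝ}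
    (hB : AnalyticAt ℝ B t₀) {μ : m → ℝ} {ν : n → ℝ} (hμν : ∀ i j, μ i ≠ ν j)
    (hBt₀ : B t₀ = fromBlocks (diagonal μ) 0 0 (diagonal ν)) :
    ∃ U : ℝ → Matrix (m ⊕ n) (m ⊕ n) ℝ, AnalyticAt ℝ U t₀ ∧
      ∀ᶠ t in 𝓝 t₀, (U t)ᵀ * U t = 1 ∧ ((U t)ᵀ * B t * U t).toBlocks₂₁ = 0 := by
  let S : Matrix n m ℝ → Matrix (m ⊕ n) (m ⊕ n) ℝ := fun X => (1 + blockSkew X) * (1 + blockSkew X)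
  let f : ℝ × Matrix n m ℝ → Matrix n m ℝ := fun v => ((S v.2)ᵀ * B v.1 * S v.2).toBlocks₂₁
  have hS : AnalyticAt ℝ (fun v : ℝ × Matrix n m ℝ => S v.2) (t₀, 0) := by
    have hK : AnalyticAt ℝ (fun v : ℝ × Matrix n m ℝ => 1 + blockSkew v.2) (t₀, 0) :=
      analyticAt_const.add (analyticAt_blockSkew analyticAt_snd)
    exact analyticAt_matrix_mul hK hK
  have hf : AnalyticAt ℝ f (t₀, 0) :=
    analyticAt_matrix_submatrix (analyticAt_matrix_mul (analyticAt_matrix_mul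
      (analyticAt_matrix_transpose hS) (hB.comp_of_eq analyticAt_fst rfl)) hS) Sum.inr Sum.inl
  obtain ⟨X, hX, -, hfX⟩ := exists_analyticAt_implicit_of_hasLineDerivAt hf
    (f' := fun X => (2 : ℝ) • (diagonal ν * X - X * diagonal μ))
    (fun X => by
      simpa only [f, hBt₀] using
        hasLineDerivAt_toBlocks₂₁_conj_one_add_blockSkew (diagonal μ) (diagonal ν) X)
    (fun X hX => eq_zero_of_diagonal_mul_sub_mul_diagonal_eq_zero hμν
      ((smul_eq_zero_iff_right two_ne_zero).1 hX))
  have hf₀ : f (t₀, 0) = 0 := by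
    simp only [f, S, hBt₀, toBlocks₂₁_conj_one_add_blockSkew_mul_self]
    simp
  refine ⟨fun t => cayley (blockSkew (X t)),
    analyticAt_cayley (analyticAt_blockSkew hX) (blockSkew_transpose _), ?_⟩
  filter_upwards [hfX] with t ht
  refine ⟨cayley_transpose_mul_self (blockSkew_transpose _), ?_⟩
  exact toBlocks₂₁_conj_cayley_blockSkew (ht.trans hf₀)

end BlockSplitting

section LocalRellich

theorem isSymm_transpose_mul_mul {m n R : Type*} [Fintype m] [CommSemiring R] {A : Matrix m m R}
    (hA : A.IsSymm) (S : Matrix m n R) : (Sᵀ * A * S).IsSymm := by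
  rw [IsSymm, transpose_mul, transpose_mul, transpose_transpose, hA.eq, Matrix.mul_assoc]

theorem transpose_mul_mul_eq_iff {ι R : Type*} [Fintype ι] [DecidableEq ι] [CommRing R]
    {U A B : Matrix ι ι R} (hU : Uᵀ * U = 1) : Uᵀ * A * U = B ↔ A = U * B * Uᵀ := by
  have hU' : U * Uᵀ = 1 := mul_eq_one_comm.1 hU
  constructor
  · rintro rfl
    calc A = U * Uᵀ * A * (U * Uᵀ) := by rw [hU', one_mul, mul_one]
      _ = U * (Uᵀ * A * U) * Uᵀ := by simp only [mul_assoc]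
  · rintro rfl
    calc Uᵀ * (U * B * Uᵀ) * U = Uᵀ * U * B * (Uᵀ * U) := by simp only [mul_assoc]
      _ = B := by rw [hU, one_mul, mul_one]

theorem exists_eventuallyEq_pow_smul_mem_submodule {𝕜 E : Type*} [NontriviallyNormedField 𝕜]
    [NormedAddCommGroup E] [NormedSpace 𝕜 E] {p : Submodule 𝕜 E} (hp : IsClosed (p : Set E))
    {f : 𝕜 → E} {z : 𝕜} (hf : AnalyticAt 𝕜 f z) (hf₀ : ¬∀ᶠ w in 𝓝 z, f w = 0)
    (hfp : ∀ᶠ w in 𝓝 z, f w ∈ p) :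
    ∃ (k : ℕ) (g : 𝕜 → E), AnalyticAt 𝕜 g z ∧ g z ≠ 0 ∧ (∀ᶠ w in 𝓝 z, g w ∈ p) ∧
      ∀ᶠ w in 𝓝 z, f w = (w - z) ^ k • g w := by
  obtain ⟨k, g, hg, hgz, hfg⟩ := hf.exists_eventuallyEq_pow_smul_nonzero_iff.2 hf₀
  have hgp : ∀ᶠ w in 𝓝[≠] z, g w ∈ p := by
    filter_upwards [hfg.filter_mono nhdsWithin_le_nhds, hfp.filter_mono nhdsWithin_le_nhds,
      self_mem_nhdsWithin] with w hw hwp hwz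
    exact (p.smul_mem_iff (pow_ne_zero k (sub_ne_zero.2 hwz))).1 (hw ▸ hwp)
  have hgzp : g z ∈ p :=
    hp.mem_of_tendsto (hg.continuousAt.tendsto.mono_left nhdsWithin_le_nhds) hgp
  refine ⟨k, g, hg, hgz, ?_, hfg⟩
  rw [← nhdsNE_sup_pure, eventually_sup, eventually_pure]
  exact ⟨hgp, hgzp⟩

theorem exists_orthogonal_diagonalization {ι : Type*} [Fintype ι] [DecidableEq ι]
    {A : Matrix ι ι ℝ} (hA : A.IsSymm) :
    ∃ (S : Matrix ι ι ℝ) (μ : ι → ℝ), Sᵀ * S = 1 ∧ Sᵀ * A * S = diagonal μ := by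
  have hA' : A.IsHermitian := (conjTranspose_eq_transpose_of_trivial A).trans hA.eq
  refine ⟨hA'.eigenvectorUnitary, hA'.eigenvalues, ?_, ?_⟩
  · simpa [conjTranspose_eq_transpose_of_trivial, star_eq_conjTranspose] using
      Unitary.coe_star_mul_self hA'.eigenvectorUnitary
  · simpa [conjTranspose_eq_transpose_of_trivial, star_eq_conjTranspose] using
      hA'.conjStarAlgAut_star_eigenvectorUnitary

variable {ι κ : Type*} [Fintype ι] [Fintype κ] [DecidableEq ι] [DecidableEq κ]

/-- The curve of matrices `H` is near `t₀` diagonalized by an analytic curve of orthogonal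
matrices. -/
def AnalyticallyDiagonalizableAt (H : ℝ → Matrix ι ι ℝ) (t₀ : ℝ) : Prop :=
  ∃ U : ℝ → Matrix ι ι ℝ, AnalyticAt ℝ U t₀ ∧
    ∀ᶠ t in 𝓝 t₀, (U t)ᵀ * U t = 1 ∧ ((U t)ᵀ * H t * U t).IsDiag

namespace AnalyticallyDiagonalizableAt

variable {H B : ℝ → Matrix ι ι ℝ} {t₀ : ℝ}

theorem smul_one (c : ℝ → ℝ) (t₀ : ℝ) :
    AnalyticallyDiagonalizableAt (fun t => c t • (1 : Matrix ι ι ℝ)) t₀ :=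
  ⟨fun _ => 1, analyticAt_const, Eventually.of_forall fun t =>
    ⟨by rw [transpose_one, one_mul],
      by simpa only [transpose_one, one_mul, mul_one] using isDiag_smul_one ι (c t)⟩⟩

theorem smul_one_add_smul (hB : AnalyticallyDiagonalizableAt B t₀) (c s : ℝ → ℝ) :
    AnalyticallyDiagonalizableAt (fun t => c t • 1 + s t • B t) t₀ := by
  obtain ⟨U, hU, hUB⟩ := hB
  refine ⟨U, hU, hUB.mono fun t ht => ⟨ht.1, ?_⟩⟩
  have hconj : (U t)ᵀ * (c t • 1 + s t • B t) * U t = c t • 1 + s t • ((U t)ᵀ * B t * U t) := by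
    simp only [mul_add, add_mul, mul_smul_comm, smul_mul_assoc, mul_one, ht.1]
  rw [hconj]
  exact (isDiag_smul_one ι (c t)).add (ht.2.smul (s t))

theorem congr (hB : AnalyticallyDiagonalizableAt B t₀) (hBH : B =ᶠ[𝓝 t₀] H) :
    AnalyticallyDiagonalizableAt H t₀ := by
  obtain ⟨U, hU, hUB⟩ := hB
  refine ⟨U, hU, ?_⟩
  filter_upwards [hUB, hBH] with t ht htB
  exact htB ▸ ht

theorem of_conj {S : ℝ → Matrix ι ι ℝ} (hS : AnalyticAt ℝ S t₀)
    (hS₁ : ∀ᶠ t in 𝓝 t₀, (S t)ᵀ * S t = 1)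
    (hH : AnalyticallyDiagonalizableAt (fun t => (S t)ᵀ * H t * S t) t₀) :
    AnalyticallyDiagonalizableAt H t₀ := by
  obtain ⟨U, hU, hUH⟩ := hH
  refine ⟨fun t => S t * U t, analyticAt_matrix_mul hS hU, ?_⟩
  filter_upwards [hS₁, hUH] with t hSt hUt
  have hconj : ∀ M, (S t * U t)ᵀ * M * (S t * U t) = (U t)ᵀ * ((S t)ᵀ * M * S t) * U t := by
    intro M
    simp only [transpose_mul, mul_assoc]
  refine ⟨?_, (hconj (H t)).symm ▸ hUt.2⟩
  simpa only [mul_one, hSt, hUt.1] using hconj 1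

theorem fromBlocks {C : ℝ → Matrix κ κ ℝ} (hB : AnalyticallyDiagonalizableAt B t₀)
    (hC : AnalyticallyDiagonalizableAt C t₀) :
    AnalyticallyDiagonalizableAt (fun t => fromBlocks (B t) 0 0 (C t)) t₀ := by
  obtain ⟨U, hU, hUB⟩ := hB
  obtain ⟨V, hV, hVC⟩ := hC
  refine ⟨fun t => Matrix.fromBlocks (U t) 0 0 (V t),
    analyticAt_matrix_fromBlocks hU analyticAt_const analyticAt_const hV, ?_⟩
  filter_upwards [hUB, hVC] with t hUt hVt
  constructor
  · simp [fromBlocks_transpose, fromBlocks_multiply, hUt.1, hVt.1]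
  · simpa [fromBlocks_transpose, fromBlocks_multiply] using hUt.2.fromBlocks hVt.2

theorem of_submatrix (e : κ ≃ ι)
    (hH : AnalyticallyDiagonalizableAt (fun t => (H t).submatrix e e) t₀) :
    AnalyticallyDiagonalizableAt H t₀ := by
  obtain ⟨U, hU, hUH⟩ := hH
  refine ⟨fun t => (U t).submatrix e.symm e.symm, analyticAt_matrix_submatrix hU _ _, ?_⟩
  filter_upwards [hUH] with t ht
  constructor
  · rw [transpose_submatrix, submatrix_mul_equiv, ht.1, submatrix_one_equiv]
  · have hconj := ht.2.submatrix e.symm.injective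
    simpa only [← submatrix_mul_equiv _ _ _ e.symm, submatrix_submatrix, Equiv.self_comp_symm,
      submatrix_id_id, transpose_submatrix] using hconj

theorem of_eventually_toBlocks₂₁_eq_zero {H : ℝ → Matrix (ι ⊕ κ) (ι ⊕ κ) ℝ}
    (hsymm : ∀ᶠ t in 𝓝 t₀, (H t).IsSymm) (hH₂₁ : ∀ᶠ t in 𝓝 t₀, (H t).toBlocks₂₁ = 0)
    (hH₁₁ : AnalyticallyDiagonalizableAt (fun t => (H t).toBlocks₁₁) t₀)
    (hH₂₂ : AnalyticallyDiagonalizableAt (fun t => (H t).toBlocks₂₂) t₀) :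
    AnalyticallyDiagonalizableAt H t₀ := by
  refine (hH₁₁.fromBlocks hH₂₂).congr ?_
  filter_upwards [hsymm, hH₂₁] with t hs h₂₁
  have h₁₂ : (H t).toBlocks₁₂ = 0 := by
    rw [← transpose_eq_zero, ← h₂₁]
    exact congrArg toBlocks₂₁ hs.eq
  conv_rhs => rw [← fromBlocks_toBlocks (H t), h₁₂, h₂₁]

end AnalyticallyDiagonalizableAt

theorem analyticallyDiagonalizableAt_of_diagonal {B : ℝ → Matrix ι ι ℝ} {t₀ : ℝ}
    (hB : AnalyticAt ℝ B t₀) (hsymm : ∀ᶠ t in 𝓝 t₀, (B t).IsSymm) {μ : ι → ℝ}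
    (hBt₀ : B t₀ = diagonal μ) (p : ι → Prop) [DecidablePred p]
    (hp : ∀ i j, p i → ¬p j → μ i ≠ μ j)
    (h₁ : ∀ H : ℝ → Matrix {i // p i} {i // p i} ℝ, AnalyticAt ℝ H t₀ →
      (∀ᶠ t in 𝓝 t₀, (H t).IsSymm) → AnalyticallyDiagonalizableAt H t₀)
    (h₂ : ∀ H : ℝ → Matrix {i // ¬p i} {i // ¬p i} ℝ, AnalyticAt ℝ H t₀ →
      (∀ᶠ t in 𝓝 t₀, (H t).IsSymm) → AnalyticallyDiagonalizableAt H t₀) :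
    AnalyticallyDiagonalizableAt B t₀ := by
  let e := Equiv.sumCompl p
  let C : ℝ → Matrix ({i // p i} ⊕ {i // ¬p i}) ({i // p i} ⊕ {i // ¬p i}) ℝ :=
    fun t => (B t).submatrix e e
  have hC : AnalyticAt ℝ C t₀ := analyticAt_matrix_submatrix hB e e
  have hCt₀ : C t₀ = fromBlocks (diagonal (μ ∘ (↑))) 0 0 (diagonal (μ ∘ (↑))) := by
    simp only [C, hBt₀, submatrix_diagonal_equiv, fromBlocks_diagonal]
    congr 1
    ext (i | i) <;> rfl
  obtain ⟨U, hU, hUC⟩ := exists_analyticAt_block_splitting hC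
    (fun i j => hp i j i.2 j.2) hCt₀
  have hUCU : AnalyticAt ℝ (fun t => (U t)ᵀ * C t * U t) t₀ :=
    analyticAt_matrix_mul (analyticAt_matrix_mul (analyticAt_matrix_transpose hU) hC) hU
  have hUCU_symm : ∀ᶠ t in 𝓝 t₀, ((U t)ᵀ * C t * U t).IsSymm := hsymm.mono fun t ht =>
    isSymm_transpose_mul_mul (ht.submatrix e) _
  refine .of_submatrix e <| .of_conj hU (hUC.mono fun t ht => ht.1) <|
    .of_eventually_toBlocks₂₁_eq_zero hUCU_symm (hUC.mono fun t ht => ht.2)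
      (h₁ _ (analyticAt_matrix_submatrix hUCU _ _) ?_)
      (h₂ _ (analyticAt_matrix_submatrix hUCU _ _) ?_)
  · exact hUCU_symm.mono fun t ht => ht.submatrix Sum.inl
  · exact hUCU_symm.mono fun t ht => ht.submatrix Sum.inr

theorem exists_isSymm_smul_one_add_pow_smul {H : ℝ → Matrix ι ι ℝ} {t₀ : ℝ} (i₀ : ι)
    (hH : AnalyticAt ℝ H t₀) (hsymm : ∀ᶠ t in 𝓝 t₀, (H t).IsSymm)
    (hH₀ : ¬∀ᶠ t in 𝓝 t₀, H t - H t i₀ i₀ • 1 = 0) :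
    ∃ (k : ℕ) (B : ℝ → Matrix ι ι ℝ), AnalyticAt ℝ B t₀ ∧ B t₀ ≠ 0 ∧ B t₀ i₀ i₀ = 0 ∧
      (∀ᶠ t in 𝓝 t₀, (B t).IsSymm) ∧
      ∀ᶠ t in 𝓝 t₀, H t i₀ i₀ • 1 + (t - t₀) ^ k • B t = H t := by
  let p : Submodule ℝ (Matrix ι ι ℝ) :=
    LinearMap.ker ((transposeLinearEquiv ι ι ℝ ℝ).toLinearMap - LinearMap.id) ⊓
      LinearMap.ker (entryLinearMap ℝ ℝ i₀ i₀)
  have hHp : ∀ᶠ t in 𝓝 t₀, H t - H t i₀ i₀ • 1 ∈ p := hsymm.mono fun t ht => by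
    simp [p, ht.eq]
  obtain ⟨k, B, hB, hBt₀, hBp, hHB⟩ := exists_eventuallyEq_pow_smul_mem_submodule
    p.closed_of_finiteDimensional
    (hH.fun_sub ((analyticAt_matrix_iff.1 hH i₀ i₀).fun_smul (analyticAt_const (v := 1)))) hH₀ hHp
  refine ⟨k, B, hB, hBt₀, hBp.self_of_nhds.2, hBp.mono fun t ht => sub_eq_zero.1 ht.1, ?_⟩
  exact hHB.mono fun t ht => by rw [← ht, add_sub_cancel]

/-- Splitting off an entry `c` and the largest power of `t - t₀` dividing `H - c` leaves a matrix
with at least two distinct eigenvalues at `t₀`, which block splitting separates. -/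
theorem analyticallyDiagonalizableAt_of_isSymm {ι : Type*} [Fintype ι] [DecidableEq ι]
    {H : ℝ → Matrix ι ι ℝ} {t₀ : ℝ} (hH : AnalyticAt ℝ H t₀)
    (hsymm : ∀ᶠ t in 𝓝 t₀, (H t).IsSymm) : AnalyticallyDiagonalizableAt H t₀ := by
  induction hn : Fintype.card ι using Nat.strong_induction_on generalizing ι with
  | _ n ih =>
  rcases isEmpty_or_nonempty ι with hι | ⟨⟨i₀⟩⟩
  · exact ⟨fun _ => 1, analyticAt_const, Eventually.of_forall fun t =>
      ⟨Subsingleton.elim _ _, fun i => hι.elim i⟩⟩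
  by_cases h₀ : ∀ᶠ t in 𝓝 t₀, H t - H t i₀ i₀ • 1 = 0
  · exact (AnalyticallyDiagonalizableAt.smul_one (fun t => H t i₀ i₀) t₀).congr
      (h₀.mono fun t ht => (sub_eq_zero.1 ht).symm)
  obtain ⟨k, B, hB, hBt₀, hB_entry, hB_symm, hHB⟩ :=
    exists_isSymm_smul_one_add_pow_smul i₀ hH hsymm h₀
  obtain ⟨S, μ, hS, hμ⟩ := exists_orthogonal_diagonalization hB_symm.self_of_nhds
  obtain ⟨j₀, hj₀⟩ : ∃ j, μ j ≠ μ i₀ := by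
    by_contra! hall
    have hBμ : B t₀ = μ i₀ • 1 := by
      rw [(transpose_mul_mul_eq_iff hS).1 hμ, funext hall, ← smul_one_eq_diagonal, mul_smul_one,
        smul_mul_assoc, mul_eq_one_comm.1 hS]
    have hμ₀ : μ i₀ = 0 := by simpa [hBμ] using hB_entry
    exact hBt₀ (by rw [hBμ, hμ₀, zero_smul])
  suffices AnalyticallyDiagonalizableAt (fun t => Sᵀ * B t * S) t₀ from
    ((AnalyticallyDiagonalizableAt.of_conj (S := fun _ => S) analyticAt_const
      (Eventually.of_forall fun _ => hS) this).smul_one_add_smul _ _).congr hHB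
  classical
  refine analyticallyDiagonalizableAt_of_diagonal
    (analyticAt_matrix_mul (analyticAt_matrix_mul analyticAt_const hB) analyticAt_const)
    (hB_symm.mono fun t ht => isSymm_transpose_mul_mul ht S) hμ (fun i => μ i = μ i₀)
    (fun i j hi hj h => hj (h ▸ hi)) (fun H' hH' hs => ih _ ?_ hH' hs rfl)
    (fun H' hH' hs => ih _ ?_ hH' hs rfl)
  · exact hn ▸ Fintype.card_subtype_lt hj₀
  · exact hn ▸ Fintype.card_subtype_lt (x := i₀) (by simp)

end LocalRellich

section Eigenframes

variable {ι : Type*} [Fintype ι] [DecidableEq ι] {t₀ : ℝ}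

theorem lie_diagonal_apply {R : Type*} [CommRing R] (A : Matrix ι ι R) (d : ι → R) (i j : ι) :
    ⁅A, diagonal d⁆ i j = A i j * (d j - d i) := by
  rw [Ring.lie_def, Matrix.sub_apply, mul_diagonal, diagonal_mul]
  ring

theorem mul_mul_transpose_lie {R : Type*} [CommRing R] {U : Matrix ι ι R} (hU : Uᵀ * U = 1)
    (A B : Matrix ι ι R) : ⁅U * A * Uᵀ, U * B * Uᵀ⁆ = U * ⁅A, B⁆ * Uᵀ := by
  have hmul : ∀ A B : Matrix ι ι R, U * A * Uᵀ * (U * B * Uᵀ) = U * (A * B) * Uᵀ := fun A B => by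
    calc U * A * Uᵀ * (U * B * Uᵀ) = U * A * (Uᵀ * U) * B * Uᵀ := by simp only [mul_assoc]
      _ = U * (A * B) * Uᵀ := by rw [hU, mul_one, mul_assoc U A B]
  rw [Ring.lie_def, Ring.lie_def, hmul, hmul, mul_sub, sub_mul]

theorem commute_mul_mul_transpose_iff {R : Type*} [CommRing R] {U A B : Matrix ι ι R}
    (hU : Uᵀ * U = 1) : Commute (U * A * Uᵀ) (U * B * Uᵀ) ↔ Commute A B := by
  rw [commute_iff_lie_eq, commute_iff_lie_eq, mul_mul_transpose_lie hU, eq_comm,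
    ← transpose_mul_mul_eq_iff hU, mul_zero, zero_mul, eq_comm]

/-- In the trace inner product `ad H` is self-adjoint, so its kernel meets its range trivially. -/
theorem lie_eq_zero_of_lie_lie_eq_zero {ι : Type*} [Fintype ι] {H X : Matrix ι ι ℝ}
    (hH : H.IsSymm) (h : ⁅⁅X, H⁆, H⁆ = 0) : ⁅X, H⁆ = 0 := by
  have hadj : (⁅X, H⁆ᵀ * ⁅X, H⁆).trace = (Xᵀ * ⁅⁅X, H⁆, H⁆).trace := by
    simp only [Ring.lie_def, transpose_sub, transpose_mul, hH.eq, sub_mul, mul_sub, trace_sub,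
      mul_assoc]
    rw [trace_mul_comm H, trace_mul_comm H]
    simp only [mul_assoc]
  rwa [h, mul_zero, trace_zero, ← conjTranspose_eq_transpose_of_trivial,
    trace_conjTranspose_mul_self_eq_zero_iff] at hadj

theorem hasDerivAt_mul_mul_transpose {ι : Type*} [Fintype ι] {U D : ℝ → Matrix ι ι ℝ}
    {K D' : Matrix ι ι ℝ} {t : ℝ} (hK : Kᵀ = -K) (hU : HasDerivAt U (U t * K) t)
    (hD : HasDerivAt D D' t) :
    HasDerivAt (fun s => U s * D s * (U s)ᵀ) (U t * (D' + ⁅K, D t⁆) * (U t)ᵀ) t := by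
  refine (hasDerivAt_matrix_mul (hasDerivAt_matrix_mul hU hD)
    (hasDerivAt_matrix_transpose hU)).congr_deriv ?_
  rw [transpose_mul, hK, Ring.lie_def]
  noncomm_ring

theorem hasDerivAt_diagonal {ι 𝕜 : Type*} [Finite ι] [DecidableEq ι] [NontriviallyNormedField 𝕜]
    {d : 𝕜 → ι → 𝕜} {d' : ι → 𝕜} {t : 𝕜} (hd : HasDerivAt d d' t) :
    HasDerivAt (fun s => diagonal (d s)) (diagonal d') t := by
  rw [hasDerivAt_matrix_iff_s7]
  intro i j
  obtain rfl | hij := eq_or_ne i j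
  · simpa only [diagonal_apply_eq] using hasDerivAt_pi.1 hd i
  · simpa only [diagonal_apply_ne _ hij] using hasDerivAt_const t (0 : 𝕜)

theorem exists_analyticAt_skew_hasDerivAt {U : ℝ → Matrix ι ι ℝ} (hU : AnalyticAt ℝ U t₀)
    (hU₁ : ∀ᶠ t in 𝓝 t₀, (U t)ᵀ * U t = 1) :
    ∃ K : ℝ → Matrix ι ι ℝ, AnalyticAt ℝ K t₀ ∧
      ∀ᶠ t in 𝓝 t₀, (K t)ᵀ = -K t ∧ HasDerivAt U (U t * K t) t := by
  refine ⟨fun t => (U t)ᵀ * deriv U t,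
    analyticAt_matrix_mul (analyticAt_matrix_transpose hU) hU.deriv, ?_⟩
  filter_upwards [hU₁.eventually_nhds, hU.eventually_analyticAt] with t ht hUt
  have hU' : HasDerivAt U (deriv U t) t := hUt.differentiableAt.hasDerivAt
  have hsum : (deriv U t)ᵀ * U t + (U t)ᵀ * deriv U t = 0 :=
    (hasDerivAt_matrix_mul (hasDerivAt_matrix_transpose hU') hU').unique
      ((hasDerivAt_const t 1).congr_of_eventuallyEq ht)
  constructor
  · rw [transpose_mul, transpose_transpose]
    exact eq_neg_of_add_eq_zero_left hsum
  · rwa [← mul_assoc, mul_eq_one_comm.1 ht.self_of_nhds, one_mul]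

theorem exists_analyticAt_eigenframe {H : ℝ → Matrix ι ι ℝ} (hH : AnalyticAt ℝ H t₀)
    (hsymm : ∀ᶠ t in 𝓝 t₀, (H t).IsSymm) :
    ∃ (U K : ℝ → Matrix ι ι ℝ) (d : ℝ → ι → ℝ),
      AnalyticAt ℝ U t₀ ∧ AnalyticAt ℝ K t₀ ∧ AnalyticAt ℝ d t₀ ∧
        ∀ᶠ t in 𝓝 t₀, (U t)ᵀ * U t = 1 ∧ (K t)ᵀ = -K t ∧ HasDerivAt U (U t * K t) t ∧
          H t = U t * diagonal (d t) * (U t)ᵀ ∧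
          HasDerivAt H (U t * (diagonal (deriv d t) + ⁅K t, diagonal (d t)⁆) * (U t)ᵀ) t := by
  obtain ⟨U, hU, hUH⟩ := analyticallyDiagonalizableAt_of_isSymm hH hsymm
  obtain ⟨K, hK, hKU⟩ := exists_analyticAt_skew_hasDerivAt hU (hUH.mono fun t ht => ht.1)
  let d : ℝ → ι → ℝ := fun t i => ((U t)ᵀ * H t * U t) i i
  have hd : AnalyticAt ℝ d t₀ := analyticAt_pi_iff.2 fun i => analyticAt_matrix_iff.1
    (analyticAt_matrix_mul (analyticAt_matrix_mul (analyticAt_matrix_transpose hU) hH) hU) i i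
  have hHd : ∀ᶠ t in 𝓝 t₀, H t = U t * diagonal (d t) * (U t)ᵀ := by
    filter_upwards [hUH] with t ht
    exact (transpose_mul_mul_eq_iff ht.1).1 ht.2.diagonal_diag.symm
  refine ⟨U, K, d, hU, hK, hd, ?_⟩
  filter_upwards [hUH, hKU, hHd.eventually_nhds, hd.eventually_analyticAt] with t ht hKt hHt hdt
  exact ⟨ht.1, hKt.1, hKt.2, hHt.self_of_nhds,
    (hasDerivAt_mul_mul_transpose hKt.1 hKt.2
      (hasDerivAt_diagonal hdt.differentiableAt.hasDerivAt)).congr_of_eventuallyEq hHt⟩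

theorem eq_of_hasDerivAt_zero {E : Type*} [NormedAddCommGroup E] [NormedSpace ℝ E] {f : ℝ → E}
    {s : Set ℝ} (hs : IsOpen s) (hs' : IsPreconnected s) (hf : ∀ t ∈ s, HasDerivAt f 0 t) {a b : ℝ}
    (ha : a ∈ s) (hb : b ∈ s) : f a = f b :=
  hs.is_const_of_deriv_eq_zero hs'
    (fun t ht => (hf t ht).differentiableAt.differentiableWithinAt) (fun t ht => (hf t ht).deriv)
    ha hb

theorem eventually_eq_zero_or_eventually_eq_zero_of_mul {𝕜 : Type*} [NontriviallyNormedField 𝕜]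
    {f g : 𝕜 → 𝕜} {z : 𝕜} (hf : AnalyticAt 𝕜 f z) (hg : AnalyticAt 𝕜 g z)
    (hfg : ∀ᶠ w in 𝓝 z, f w * g w = 0) : (∀ᶠ w in 𝓝 z, f w = 0) ∨ ∀ᶠ w in 𝓝 z, g w = 0 := by
  have htop : analyticOrderAt (f * g) z = ⊤ := analyticOrderAt_eq_top.2 hfg
  rwa [analyticOrderAt_mul hf hg, ENat.add_eq_top, analyticOrderAt_eq_top,
    analyticOrderAt_eq_top] at htop

theorem lie_diagonal_eq_zero_of_commute {K D' : Matrix ι ι ℝ} {d : ι → ℝ}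
    (hD' : Commute D' (diagonal d)) (h : Commute (D' + ⁅K, diagonal d⁆) (diagonal d)) :
    ⁅K, diagonal d⁆ = 0 := by
  have hcomm := h.sub_left hD'
  rw [add_sub_cancel_left] at hcomm
  exact lie_eq_zero_of_lie_lie_eq_zero (isSymm_diagonal d) hcomm.lie_eq

/-- The connection matrix of a local eigenframe commutes with all nearby eigenvalue matrices, so
the frame at `t₀` may be kept. -/
theorem exists_orthogonal_eventually_isDiag_of_commute {G G' : ℝ → Matrix ι ι ℝ}
    (hG : AnalyticAt ℝ G t₀) (hsymm : ∀ᶠ t in 𝓝 t₀, (G t).IsSymm)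
    (hG' : ∀ᶠ t in 𝓝 t₀, HasDerivAt G (G' t) t) (hcomm : ∀ᶠ t in 𝓝 t₀, Commute (G' t) (G t)) :
    ∃ S : Matrix ι ι ℝ, Sᵀ * S = 1 ∧ ∀ᶠ t in 𝓝 t₀, (Sᵀ * G t * S).IsDiag := by
  obtain ⟨U, K, d, -, hK, hd, hframe⟩ := exists_analyticAt_eigenframe hG hsymm
  have hlie : ∀ᶠ t in 𝓝 t₀, ⁅K t, diagonal (d t)⁆ = 0 := by
    filter_upwards [hframe, hG', hcomm] with t ⟨hUt, _, _, hGt, hG_frame⟩ hG't hct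
    rw [hG't.unique hG_frame, hGt] at hct
    exact lie_diagonal_eq_zero_of_commute (commute_diagonal _ _)
      ((commute_mul_mul_transpose_iff hUt).1 hct)
  have hlie₂ : ∀ᶠ p in 𝓝 t₀ ×ˢ 𝓝 t₀, ⁅K p.1, diagonal (d p.2)⁆ = 0 := by
    have hentry : ∀ i j, ∀ᶠ p in 𝓝 t₀ ×ˢ 𝓝 t₀, K p.1 i j * (d p.2 j - d p.2 i) = 0 := by
      intro i j
      obtain h | h := eventually_eq_zero_or_eventually_eq_zero_of_mul
        (analyticAt_matrix_iff.1 hK i j)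
        ((analyticAt_pi_iff.1 hd j).fun_sub (analyticAt_pi_iff.1 hd i))
        (hlie.mono fun t ht => (lie_diagonal_apply _ _ i j).symm.trans (congrFun₂ ht i j))
      · exact (h.prod_inl _).mono fun p hp => by rw [hp, zero_mul]
      · exact (h.prod_inr _).mono fun p hp => mul_eq_zero_of_right _ hp
    filter_upwards [eventually_all.2 fun i => eventually_all.2 (hentry i)] with p hp
    ext i j
    rw [lie_diagonal_apply, hp i j, Matrix.zero_apply]
  obtain ⟨ε, hε, hball⟩ := Metric.nhds_basis_ball.prod_self.eventually_iff.1
    (hlie₂.and (hframe.prod_inl _))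
  have ht₀ := Metric.mem_ball_self (x := t₀) hε
  refine ⟨U t₀, hframe.self_of_nhds.1, ?_⟩
  filter_upwards [Metric.ball_mem_nhds t₀ hε] with τ hτ
  have hconst : U t₀ * diagonal (d τ) * (U t₀)ᵀ = U τ * diagonal (d τ) * (U τ)ᵀ := by
    refine eq_of_hasDerivAt_zero (f := fun t => U t * diagonal (d τ) * (U t)ᵀ) Metric.isOpen_ball
      (convex_ball t₀ ε).isPreconnected (fun t ht => ?_) ht₀ hτ
    obtain ⟨hKτ, -, hKt, hUt, -⟩ := hball (Set.mk_mem_prod ht hτ)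
    have hderiv := hasDerivAt_mul_mul_transpose hKt hUt (hasDerivAt_const t (diagonal (d τ)))
    rwa [hKτ, add_zero, mul_zero, zero_mul] at hderiv
  have hGτ : G τ = U τ * diagonal (d τ) * (U τ)ᵀ := (hball (Set.mk_mem_prod hτ hτ)).2.2.2.2.1
  rw [(transpose_mul_mul_eq_iff hframe.self_of_nhds.1).2 (hGτ.trans hconst.symm)]
  exact isDiag_diagonal _

end Eigenframes

section Eigenconnections

variable {ι : Type*} [Fintype ι]

/-- `X` is the connection matrix, for a symmetric matrix `H` moving with velocity `H'`, of an
eigenframe that does not rotate inside the eigenspaces: the range condition says that `X` has no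
component commuting with `H`, and the last one that `H' - ⁅X, H⁆` only moves eigenvalues. -/
structure IsEigenconnection (H H' X : Matrix ι ι ℝ) : Prop where
  transpose_eq_neg : Xᵀ = -X
  exists_eq_lie : ∃ Y : Matrix ι ι ℝ, X = ⁅Y, H⁆
  commute_sub_lie : Commute (H' - ⁅X, H⁆) H

namespace IsEigenconnection

theorem unique {H H' X X' : Matrix ι ι ℝ} (hX : IsEigenconnection H H' X)
    (hX' : IsEigenconnection H H' X') (hH : H.IsSymm) : X = X' := by
  obtain ⟨Y, hY⟩ := hX.exists_eq_lie
  obtain ⟨Y', hY'⟩ := hX'.exists_eq_lie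
  have hsub_lie : ∀ A B : Matrix ι ι ℝ, ⁅A, H⁆ - ⁅B, H⁆ = ⁅A - B, H⁆ := fun A B => by
    simp only [Ring.lie_def]
    noncomm_ring
  have hsub : X - X' = ⁅Y - Y', H⁆ := by rw [hY, hY', hsub_lie]
  have hcomm : Commute ⁅⁅Y - Y', H⁆, H⁆ H := by
    have h := hX'.commute_sub_lie.sub_left hX.commute_sub_lie
    rwa [sub_sub_sub_cancel_left, hsub_lie, hsub] at h
  rw [← sub_eq_zero, hsub]
  exact lie_eq_zero_of_lie_lie_eq_zero hH (lie_eq_zero_of_lie_lie_eq_zero hH hcomm.lie_eq)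

variable [DecidableEq ι]

theorem mul_mul_transpose {U H H' X : Matrix ι ι ℝ} (hX : IsEigenconnection H H' X)
    (hU : Uᵀ * U = 1) : IsEigenconnection (U * H * Uᵀ) (U * H' * Uᵀ) (U * X * Uᵀ) where
  transpose_eq_neg := by
    rw [transpose_mul, transpose_mul, transpose_transpose, hX.transpose_eq_neg, neg_mul, mul_neg,
      mul_assoc]
  exists_eq_lie := by
    obtain ⟨Y, rfl⟩ := hX.exists_eq_lie
    exact ⟨U * Y * Uᵀ, (mul_mul_transpose_lie hU Y H).symm⟩
  commute_sub_lie := by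
    rw [mul_mul_transpose_lie hU, ← sub_mul, ← mul_sub, commute_mul_mul_transpose_iff hU]
    exact hX.commute_sub_lie

theorem of_diagonal {K : Matrix ι ι ℝ} (hK : Kᵀ = -K) (d d' : ι → ℝ) :
    IsEigenconnection (diagonal d) (diagonal d' + ⁅K, diagonal d⁆)
      (of fun i j => if d i = d j then 0 else K i j) where
  transpose_eq_neg := by
    ext i j
    have hKij : K j i = -K i j := congrFun₂ hK i j
    simp only [transpose_apply, of_apply, Matrix.neg_apply, hKij, eq_comm (a := d j)]
    split_ifs <;> simp only [neg_zero]
  exists_eq_lie := by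
    refine ⟨of fun i j => K i j / (d j - d i), ?_⟩
    ext i j
    rw [lie_diagonal_apply, of_apply, of_apply]
    split_ifs with h
    · rw [h, sub_self, mul_zero]
    · rw [div_mul_cancel₀ _ (sub_ne_zero.2 (Ne.symm h))]
  commute_sub_lie := by
    have hlie : ⁅of fun i j => if d i = d j then 0 else K i j, diagonal d⁆ =
        ⁅K, diagonal d⁆ := by
      ext i j
      rw [lie_diagonal_apply, lie_diagonal_apply, of_apply]
      split_ifs with h
      · rw [h, sub_self, mul_zero, mul_zero]
      · rfl
    rw [hlie, add_sub_cancel_right]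
    exact commute_diagonal d' d

end IsEigenconnection

theorem exists_analyticAt_isEigenconnection {H H' : ℝ → Matrix ι ι ℝ} {t₀ : ℝ}
    (hH : AnalyticAt ℝ H t₀) (hsymm : ∀ᶠ t in 𝓝 t₀, (H t).IsSymm)
    (hH' : ∀ᶠ t in 𝓝 t₀, HasDerivAt H (H' t) t) :
    ∃ X : ℝ → Matrix ι ι ℝ, AnalyticAt ℝ X t₀ ∧
      ∀ᶠ t in 𝓝[≠] t₀, IsEigenconnection (H t) (H' t) (X t) := by
  classical
  obtain ⟨U, K, d, hU, hK, hd, hframe⟩ := exists_analyticAt_eigenframe hH hsymm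
  let L : ℝ → Matrix ι ι ℝ :=
    fun t => of fun i j => if ∀ᶠ s in 𝓝 t₀, d s i = d s j then 0 else K t i j
  have hL : AnalyticAt ℝ L t₀ := by
    refine analyticAt_matrix_iff.2 fun i j => ?_
    by_cases hij : ∀ᶠ s in 𝓝 t₀, d s i = d s j
    · simpa only [L, of_apply, if_pos hij] using analyticAt_const
    · simpa only [L, of_apply, if_neg hij] using analyticAt_matrix_iff.1 hK i j
  have hcond : ∀ᶠ t in 𝓝[≠] t₀, ∀ i j, d t i = d t j ↔ ∀ᶠ s in 𝓝 t₀, d s i = d s j := by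
    refine eventually_all.2 fun i => eventually_all.2 fun j => ?_
    obtain h | h := (analyticAt_pi_iff.1 hd i).eventually_eq_or_eventually_ne
      (analyticAt_pi_iff.1 hd j)
    · exact eventually_nhdsWithin_of_eventually_nhds (h.mono fun t ht => iff_of_true ht h)
    · exact h.mono fun t ht => iff_of_false ht fun hs =>
        (h.and (hs.filter_mono nhdsWithin_le_nhds)).exists.elim fun s hs => hs.1 hs.2
  refine ⟨fun t => U t * L t * (U t)ᵀ,
    analyticAt_matrix_mul (analyticAt_matrix_mul hU hL) (analyticAt_matrix_transpose hU), ?_⟩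
  filter_upwards [hframe.filter_mono nhdsWithin_le_nhds, hH'.filter_mono nhdsWithin_le_nhds, hcond]
    with t ⟨hUt, hKt, _, hHt, hH_frame⟩ hH't hLt
  have hdiag := (IsEigenconnection.of_diagonal hKt (d t) (deriv d t)).mul_mul_transpose hUt
  simpa only [hHt, hH't.unique hH_frame, L, ← hLt] using hdiag

theorem exists_analyticOnNhd_of_local {E : Type*} [NormedAddCommGroup E] [NormedSpace ℝ E]
    [CompleteSpace E] {I : Set ℝ} {P : ℝ → E → Prop} (hI : IsOpen I)
    (huniq : ∀ t ∈ I, ∀ x y, P t x → P t y → x = y)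
    (hloc : ∀ t₀ ∈ I, ∃ X : ℝ → E, AnalyticAt ℝ X t₀ ∧ ∀ᶠ t in 𝓝[≠] t₀, P t (X t)) :
    ∃ X : ℝ → E, AnalyticOnNhd ℝ X I ∧ ∀ t₀ ∈ I, ∀ᶠ t in 𝓝[≠] t₀, P t (X t) := by
  choose! Y hY hP using hloc
  have hpunctured : ∀ t₀ ∈ I, ∀ᶠ t in 𝓝[≠] t₀, Y t t = Y t₀ t := by
    intro t₀ ht₀
    have hPt₀ : ∀ᶠ t in 𝓝[≠] t₀, ∀ᶠ s in 𝓝[≠] t, P s (Y t₀ s) := by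
      filter_upwards [eventually_eventually_nhdsWithin.2 (hP t₀ ht₀), self_mem_nhdsWithin]
        with t ht htne
      rw [isOpen_compl_singleton.nhdsWithin_eq htne] at ht
      exact ht.filter_mono nhdsWithin_le_nhds
    filter_upwards [hPt₀, (hY t₀ ht₀).eventually_analyticAt.filter_mono nhdsWithin_le_nhds,
      mem_nhdsWithin_of_mem_nhds (hI.mem_nhds ht₀)] with t ht hYt htI
    refine (((hY t htI).continuousAt.eventuallyEq_nhds_iff_eventuallyEq_nhdsNE
      hYt.continuousAt).1 ?_).self_of_nhds
    filter_upwards [ht, hP t htI, mem_nhdsWithin_of_mem_nhds (hI.mem_nhds htI)] with s h₀ h hsI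
    exact huniq s hsI _ _ h h₀
  have hnear : ∀ t₀ ∈ I, ∀ᶠ t in 𝓝 t₀, Y t t = Y t₀ t := fun t₀ ht₀ => by
    rw [← nhdsNE_sup_pure, eventually_sup, eventually_pure]
    exact ⟨hpunctured t₀ ht₀, rfl⟩
  refine ⟨fun t => Y t t, fun t₀ ht₀ => (hY t₀ ht₀).congr ((hnear t₀ ht₀).mono fun t => Eq.symm),
    fun t₀ ht₀ => ?_⟩
  filter_upwards [hpunctured t₀ ht₀, hP t₀ ht₀] with t ht hPt
  rwa [ht]

theorem eq_of_eventually_nhdsNE_eq {X Y : Type*} [TopologicalSpace X] [TopologicalSpace Y]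
    [T2Space Y] {f g : X → Y} {x : X} [(𝓝[≠] x).NeBot] (hf : ContinuousAt f x)
    (hg : ContinuousAt g x) (h : ∀ᶠ y in 𝓝[≠] x, f y = g y) : f x = g x :=
  ((hf.eventuallyEq_nhds_iff_eventuallyEq_nhdsNE hg).1 h).self_of_nhds

theorem exists_analyticOnNhd_skew_commute_deriv_sub_lie {I : Set ℝ} {H : ℝ → Matrix ι ι ℝ}
    (hI : IsOpen I) (hH : AnalyticOnNhd ℝ H I) (hsymm : ∀ t ∈ I, (H t).IsSymm) :
    ∃ Ω : ℝ → Matrix ι ι ℝ, AnalyticOnNhd ℝ Ω I ∧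
      ∀ t ∈ I, (Ω t)ᵀ = -Ω t ∧ Commute (deriv H t - ⁅Ω t, H t⁆) (H t) := by
  obtain ⟨Ω, hΩ, hP⟩ := exists_analyticOnNhd_of_local
    (P := fun t X => IsEigenconnection (H t) (deriv H t) X) hI
    (fun t ht X Y hX hY => hX.unique hY (hsymm t ht))
    fun t₀ ht₀ => exists_analyticAt_isEigenconnection (hH t₀ ht₀)
      (eventually_of_mem (hI.mem_nhds ht₀) hsymm)
      ((hH t₀ ht₀).eventually_analyticAt.mono fun t ht => ht.differentiableAt.hasDerivAt)
  refine ⟨Ω, hΩ, fun t ht => ⟨?_, ?_⟩⟩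
  · exact eq_of_eventually_nhdsNE_eq (f := fun s => (Ω s)ᵀ)
      (analyticAt_matrix_transpose (hΩ t ht)).continuousAt (hΩ t ht).continuousAt.neg
      ((hP t ht).mono fun s hs => hs.transpose_eq_neg)
  · have hG : AnalyticAt ℝ (fun s => deriv H s - ⁅Ω s, H s⁆) t :=
      (hH t ht).deriv.fun_sub ((analyticAt_matrix_mul (hΩ t ht) (hH t ht)).fun_sub
        (analyticAt_matrix_mul (hH t ht) (hΩ t ht)))
    exact eq_of_eventually_nhdsNE_eq (analyticAt_matrix_mul hG (hH t ht)).continuousAt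
      (analyticAt_matrix_mul (hH t ht) hG).continuousAt
      ((hP t ht).mono fun s hs => hs.commute_sub_lie.eq)

end Eigenconnections

section OrthogonalTransport

open scoped NNReal

theorem exists_Ioo_mem_mem_Icc_subset {I : Set ℝ} (hI : IsOpen I) (hI' : I.OrdConnected) {s t : ℝ}
    (hs : s ∈ I) (ht : t ∈ I) :
    ∃ a b, s ∈ Set.Ioo a b ∧ t ∈ Set.Ioo a b ∧ Set.Icc a b ⊆ I := by
  have hmin : min s t ∈ I := by rcases min_choice s t with h | h <;> rwa [h]
  have hmax : max s t ∈ I := by rcases max_choice s t with h | h <;> rwa [h]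
  obtain ⟨a, ha, haI⟩ := ((frequently_lt_nhds _).and_eventually (hI.eventually_mem hmin)).exists
  obtain ⟨b, hb, hbI⟩ := ((frequently_gt_nhds _).and_eventually (hI.eventually_mem hmax)).exists
  rw [lt_min_iff] at ha
  rw [max_lt_iff] at hb
  exact ⟨a, b, ⟨ha.1, hb.1⟩, ⟨ha.2, hb.2⟩, hI'.out haI hbI⟩

variable {E : Type*} [NormedAddCommGroup E] [NormedSpace ℝ E]

theorem exists_forall_mem_Ioo_hasDerivAt_of_lipschitzWith [CompleteSpace E] {v : ℝ → E → E}
    {a b t₀ : ℝ} {K L : ℝ≥0} (hcont : ∀ x, ContinuousOn (v · x) (Set.Icc a b))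
    (hlip : ∀ t ∈ Set.Icc a b, LipschitzWith K (v t)) (hnorm : ∀ t ∈ Set.Icc a b, ∀ x, ‖v t x‖ ≤ L)
    (ht₀ : t₀ ∈ Set.Ioo a b) (x₀ : E) :
    ∃ x : ℝ → E, x t₀ = x₀ ∧ ∀ t ∈ Set.Ioo a b, HasDerivAt x (v t (x t)) t := by
  have hv : IsPicardLindelof v ⟨t₀, Set.Ioo_subset_Icc_self ht₀⟩ x₀
      (L * (max (b - t₀) (t₀ - a)).toNNReal) 0 L K :=
    { lipschitzOnWith := fun t ht => (hlip t ht).lipschitzOnWith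
      continuousOn := fun x _ => hcont x
      norm_le := fun t ht x _ => hnorm t ht x
      mul_max_le := by
        rw [NNReal.coe_zero, sub_zero, NNReal.coe_mul,
          Real.coe_toNNReal _ (le_max_of_le_left (sub_nonneg.2 ht₀.2.le))] }
  obtain ⟨x, hx₀, hx⟩ := hv.exists_eq_forall_mem_Icc_hasDerivWithinAt₀
  exact ⟨x, hx₀, fun t ht =>
    (hx t (Set.Ioo_subset_Icc_self ht)).hasDerivAt (Icc_mem_nhds ht.1 ht.2)⟩

theorem exists_forall_mem_hasDerivAt_of_lipschitzWith [CompleteSpace E] {v : ℝ → E → E}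
    {I : Set ℝ} (hI : IsOpen I) (hI' : I.OrdConnected) (hcont : ∀ x, ContinuousOn (v · x) I)
    (hv : ∀ a b, Set.Icc a b ⊆ I →
      ∃ K L : ℝ≥0, ∀ t ∈ Set.Icc a b, LipschitzWith K (v t) ∧ ∀ x, ‖v t x‖ ≤ L)
    {t₀ : ℝ} (ht₀ : t₀ ∈ I) (x₀ : E) :
    ∃ x : ℝ → E, x t₀ = x₀ ∧ ∀ t ∈ I, HasDerivAt x (v t (x t)) t := by
  choose! a b hat₀ hat hab using fun t (ht : t ∈ I) => exists_Ioo_mem_mem_Icc_subset hI hI' ht₀ ht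
  have hsol : ∀ t ∈ I, ∃ y : ℝ → E,
      y t₀ = x₀ ∧ ∀ s ∈ Set.Ioo (a t) (b t), HasDerivAt y (v s (y s)) s := fun t ht => by
    obtain ⟨K, L, hKL⟩ := hv _ _ (hab t ht)
    exact exists_forall_mem_Ioo_hasDerivAt_of_lipschitzWith (fun x => (hcont x).mono (hab t ht))
      (fun s hs => (hKL s hs).1) (fun s hs => (hKL s hs).2) (hat₀ t ht) x₀
  choose! y hy₀ hy using hsol
  have hagree : ∀ t ∈ I, ∀ s ∈ Set.Ioo (a t) (b t), y s s = y t s := fun t ht s hs => by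
    have hsI : s ∈ I := hab t ht (Set.Ioo_subset_Icc_self hs)
    obtain ⟨K, L, hKL⟩ := hv _ _ (hab t ht)
    have hinter : ∀ {r}, r ∈ Set.Ioo (max (a s) (a t)) (min (b s) (b t)) ↔
        r ∈ Set.Ioo (a s) (b s) ∧ r ∈ Set.Ioo (a t) (b t) := fun {r} => by
      rw [← Set.mem_inter_iff, Set.Ioo_inter_Ioo]
    exact ODE_solution_unique_of_mem_Ioo (s := fun _ => Set.univ)
      (fun r hr => (hKL r (Set.Ioo_subset_Icc_self (hinter.1 hr).2)).1.lipschitzOnWith)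
      (hinter.2 ⟨hat₀ s hsI, hat₀ t ht⟩)
      (fun r hr => ⟨hy s hsI r (hinter.1 hr).1, Set.mem_univ _⟩)
      (fun r hr => ⟨hy t ht r (hinter.1 hr).2, Set.mem_univ _⟩)
      ((hy₀ s hsI).trans (hy₀ t ht).symm) (hinter.2 ⟨hat s hsI, hs⟩)
  exact ⟨fun t => y t t, hy₀ t₀ ht₀, fun t ht => (hy t ht t (hat t ht)).congr_of_eventuallyEq
    (eventually_of_mem (Ioo_mem_nhds (hat t ht).1 (hat t ht).2) (hagree t ht))⟩

theorem norm_inv_max_one_norm_smul_le (x : E) : ‖(max 1 ‖x‖)⁻¹ • x‖ ≤ 1 := by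
  rw [norm_smul, norm_inv, Real.norm_of_nonneg (by positivity), inv_mul_le_iff₀ (by positivity),
    mul_one]
  exact le_max_right _ _

theorem lipschitzWith_inv_max_one_norm_smul : LipschitzWith 2 fun x : E => (max 1 ‖x‖)⁻¹ • x := by
  refine LipschitzWith.of_dist_le_mul fun x y => ?_
  rw [dist_eq_norm, dist_eq_norm, NNReal.coe_ofNat]
  have hmax : |max 1 ‖y‖ - max 1 ‖x‖| ≤ ‖x - y‖ := by
    rw [max_comm 1, max_comm 1, norm_sub_rev]
    exact (abs_max_sub_max_le_abs _ _ _).trans (abs_norm_sub_norm_le y x)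
  have hxinv : (max 1 ‖x‖)⁻¹ ≤ 1 := inv_le_one_of_one_le₀ (le_max_left _ _)
  have hsplit : (max 1 ‖x‖)⁻¹ • x - (max 1 ‖y‖)⁻¹ • y =
      (max 1 ‖x‖)⁻¹ • ((x - y) + (max 1 ‖y‖ - max 1 ‖x‖) • (max 1 ‖y‖)⁻¹ • y) := by
    match_scalars <;> field_simp
    ring
  calc ‖(max 1 ‖x‖)⁻¹ • x - (max 1 ‖y‖)⁻¹ • y‖
      ≤ 1 * (‖x - y‖ + ‖x - y‖ * 1) := by
        rw [hsplit, norm_smul, Real.norm_of_nonneg (by positivity)]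
        gcongr
        refine (norm_add_le _ _).trans ?_
        rw [norm_smul]
        gcongr
        exacts [hmax, norm_inv_max_one_norm_smul_le y]
    _ = 2 * ‖x - y‖ := by ring

theorem exists_forall_mem_hasDerivAt_clm_truncation [CompleteSpace E] {A : ℝ → E →L[ℝ] E}
    {I : Set ℝ} (hI : IsOpen I) (hI' : I.OrdConnected) (hA : ContinuousOn A I) {t₀ : ℝ}
    (ht₀ : t₀ ∈ I) (x₀ : E) :
    ∃ x : ℝ → E, x t₀ = x₀ ∧ ∀ t ∈ I, HasDerivAt x (A t ((max 1 ‖x t‖)⁻¹ • x t)) t := by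
  refine exists_forall_mem_hasDerivAt_of_lipschitzWith
    (v := fun t x => A t ((max 1 ‖x‖)⁻¹ • x)) hI hI'
    (fun x => hA.clm_apply continuousOn_const) (fun a b hab => ?_) ht₀ x₀
  obtain ⟨C, hC⟩ := isCompact_Icc.exists_bound_of_continuousOn (hA.mono hab)
  have hnorm : ∀ t ∈ Set.Icc a b, ‖A t‖ ≤ C.toNNReal := fun t ht =>
    (hC t ht).trans (Real.le_coe_toNNReal C)
  refine ⟨C.toNNReal * 2, C.toNNReal, fun t ht => ⟨?_, fun x => ?_⟩⟩
  · exact ((A t).lipschitz.weaken (hnorm t ht)).comp lipschitzWith_inv_max_one_norm_smul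
  · calc ‖A t ((max 1 ‖x‖)⁻¹ • x)‖ ≤ C.toNNReal * 1 :=
          (A t).le_of_opNorm_le_of_le (hnorm t ht) (norm_inv_max_one_norm_smul_le x)
      _ = C.toNNReal := mul_one _

variable {ι : Type*} [Fintype ι]

theorem hasDerivAt_transpose_mul_self_of_skew {Q : ℝ → Matrix ι ι ℝ} {A : Matrix ι ι ℝ} {c t : ℝ}
    (hA : Aᵀ = -A) (hQ : HasDerivAt Q (A * (c • Q t)) t) :
    HasDerivAt (fun s => (Q s)ᵀ * Q s) 0 t := by
  refine (hasDerivAt_matrix_mul (hasDerivAt_matrix_transpose hQ) hQ).congr_deriv ?_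
  rw [mul_smul_comm, transpose_smul, transpose_mul, hA, smul_mul_assoc, mul_smul_comm, ← smul_add,
    mul_neg, neg_mul, mul_assoc, neg_add_cancel, smul_zero]

variable [DecidableEq ι]

theorem norm_le_one_of_transpose_mul_self_eq_one {X : Matrix ι ι ℝ} (hX : Xᵀ * X = 1) :
    ‖X‖ ≤ 1 := by
  refine (Matrix.norm_le_iff zero_le_one).2 fun i j => ?_
  have hsum : ∑ k, X k j * X k j = 1 := by
    simpa only [mul_apply, transpose_apply, one_apply_eq] using congrFun₂ hX j j
  rw [Real.norm_eq_abs, ← sq_le_one_iff_abs_le_one, sq, ← hsum]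
  exact Finset.single_le_sum (f := fun k => X k j * X k j) (fun k _ => mul_self_nonneg _)
    (Finset.mem_univ i)

/-- The truncation makes the vector field bounded, so that solutions exist on all of `I`. It is
inactive on orthogonal matrices, whose orthogonality the truncated flow still preserves. -/
theorem exists_orthogonal_hasDerivAt_mul_of_skew {Ω : ℝ → Matrix ι ι ℝ} {I : Set ℝ} (hI : IsOpen I)
    (hI' : I.OrdConnected) (hΩ : ContinuousOn Ω I) (hskew : ∀ t ∈ I, (Ω t)ᵀ = -Ω t) :
    ∃ Q : ℝ → Matrix ι ι ℝ, ∀ t ∈ I, HasDerivAt Q (Ω t * Q t) t ∧ (Q t)ᵀ * Q t = 1 := by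
  obtain rfl | ⟨t₀, ht₀⟩ := I.eq_empty_or_nonempty
  · exact ⟨0, fun t ht => ht.elim⟩
  let T : Matrix ι ι ℝ →ₗ[ℝ] Matrix ι ι ℝ →L[ℝ] Matrix ι ι ℝ :=
    LinearMap.toContinuousLinearMap.toLinearMap ∘ₗ LinearMap.mul ℝ (Matrix ι ι ℝ)
  obtain ⟨Q, hQ₀, hQ⟩ := exists_forall_mem_hasDerivAt_clm_truncation hI hI'
    (T.continuous_of_finiteDimensional.comp_continuousOn hΩ) ht₀ 1
  have hortho : ∀ t ∈ I, (Q t)ᵀ * Q t = 1 := fun t ht => by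
    have hconst := eq_of_hasDerivAt_zero (f := fun s => (Q s)ᵀ * Q s) hI hI'.isPreconnected
      (fun s hs => hasDerivAt_transpose_mul_self_of_skew (hskew s hs) (hQ s hs)) ht ht₀
    simpa only [hQ₀, transpose_one, mul_one] using hconst
  refine ⟨Q, fun t ht => ⟨?_, hortho t ht⟩⟩
  have hderiv : HasDerivAt Q (Ω t * ((max 1 ‖Q t‖)⁻¹ • Q t)) t := hQ t ht
  rwa [max_eq_left (norm_le_one_of_transpose_mul_self_eq_one (hortho t ht)), inv_one,
    one_smul] at hderiv

theorem analyticAt_of_eventually_hasDerivAt_mul {ι : Type*} [Fintype ι]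
    {Ω Q : ℝ → Matrix ι ι ℝ} {t₀ : ℝ} (hΩ : AnalyticAt ℝ Ω t₀)
    (hQ : ∀ᶠ t in 𝓝 t₀, HasDerivAt Q (Ω t * Q t) t) : AnalyticAt ℝ Q t₀ := by
  have hF : AnalyticAt ℝ (fun p : ℝ × Matrix ι ι ℝ => ((1 : ℝ), Ω p.1 * p.2)) (t₀, Q t₀) :=
    analyticAt_const.prod (analyticAt_matrix_mul (hΩ.fun_comp_of_eq analyticAt_fst rfl)
      analyticAt_snd)
  have hpair : AnalyticAt ℝ (fun t => (t, Q t)) t₀ := analyticAt_of_eventually_hasDerivAt hF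
    (hQ.mono fun t ht => (hasDerivAt_id t).prodMk ht)
  exact analyticAt_snd.comp hpair

end OrthogonalTransport

section GlobalRellich

variable {ι : Type*} [Fintype ι] {I : Set ℝ}

theorem hasDerivAt_transpose_mul_mul_of_transport {H Ω Q : ℝ → Matrix ι ι ℝ} {H' : Matrix ι ι ℝ}
    {t : ℝ} (hΩ : (Ω t)ᵀ = -Ω t) (hH : HasDerivAt H H' t) (hQ : HasDerivAt Q (Ω t * Q t) t) :
    HasDerivAt (fun s => (Q s)ᵀ * H s * Q s) ((Q t)ᵀ * (H' - ⁅Ω t, H t⁆) * Q t) t := by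
  have hQt : HasDerivAt (fun s => (Q s)ᵀ) ((Q t)ᵀ * -Ω t) t :=
    (hasDerivAt_matrix_transpose hQ).congr_deriv (by rw [transpose_mul, hΩ])
  refine (hasDerivAt_mul_mul_transpose (by rw [transpose_neg, hΩ]) hQt hH).congr_deriv ?_
  rw [transpose_transpose, Ring.lie_def, Ring.lie_def]
  noncomm_ring

variable [DecidableEq ι]

theorem exists_orthogonal_analyticOnNhd_commute {H : ℝ → Matrix ι ι ℝ} (hI : IsOpen I)
    (hI' : I.OrdConnected) (hH : AnalyticOnNhd ℝ H I) (hsymm : ∀ t ∈ I, (H t).IsSymm) :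
    ∃ Q G' : ℝ → Matrix ι ι ℝ, AnalyticOnNhd ℝ Q I ∧ ∀ t ∈ I, (Q t)ᵀ * Q t = 1 ∧
      HasDerivAt (fun s => (Q s)ᵀ * H s * Q s) (G' t) t ∧
      Commute (G' t) ((Q t)ᵀ * H t * Q t) := by
  obtain ⟨Ω, hΩ, hΩH⟩ := exists_analyticOnNhd_skew_commute_deriv_sub_lie hI hH hsymm
  obtain ⟨Q, hQ⟩ := exists_orthogonal_hasDerivAt_mul_of_skew hI hI' hΩ.continuousOn
    fun t ht => (hΩH t ht).1
  refine ⟨Q, fun t => (Q t)ᵀ * (deriv H t - ⁅Ω t, H t⁆) * Q t,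
    fun t ht => analyticAt_of_eventually_hasDerivAt_mul (hΩ t ht)
      (eventually_of_mem (hI.mem_nhds ht) fun s hs => (hQ s hs).1),
    fun t ht => ⟨(hQ t ht).2, hasDerivAt_transpose_mul_mul_of_transport (hΩH t ht).1
      (hH t ht).differentiableAt.hasDerivAt (hQ t ht).1, ?_⟩⟩
  have hQt : ((Q t)ᵀ)ᵀ * (Q t)ᵀ = 1 := mul_eq_one_comm.1 (hQ t ht).2
  exact (commute_mul_mul_transpose_iff hQt).2 (hΩH t ht).2

/-- Rotated along its eigenconnection, `H` commutes with its derivative, so that one constant frame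
diagonalizes it near a point and hence, by the identity theorem, on all of `I`. -/
theorem exists_analyticOnNhd_orthogonal_isDiag {H : ℝ → Matrix ι ι ℝ} (hI : IsOpen I)
    (hI' : I.OrdConnected) (hH : AnalyticOnNhd ℝ H I) (hsymm : ∀ t ∈ I, (H t).IsSymm) :
    ∃ V : ℝ → Matrix ι ι ℝ, AnalyticOnNhd ℝ V I ∧
      ∀ t ∈ I, (V t)ᵀ * V t = 1 ∧ ((V t)ᵀ * H t * V t).IsDiag := by
  obtain rfl | ⟨t₀, ht₀⟩ := I.eq_empty_or_nonempty
  · exact ⟨0, fun t ht => ht.elim, fun t ht => ht.elim⟩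
  obtain ⟨Q, G', hQ, hQG⟩ := exists_orthogonal_analyticOnNhd_commute hI hI' hH hsymm
  have hG : AnalyticOnNhd ℝ (fun t => (Q t)ᵀ * H t * Q t) I := fun t ht =>
    analyticAt_matrix_mul (analyticAt_matrix_mul (analyticAt_matrix_transpose (hQ t ht)) (hH t ht))
      (hQ t ht)
  have hnhds : ∀ᶠ t in 𝓝 t₀, t ∈ I := hI.mem_nhds ht₀
  obtain ⟨S, hS, hdiag⟩ := exists_orthogonal_eventually_isDiag_of_commute (hG t₀ ht₀)
    (hnhds.mono fun t ht => isSymm_transpose_mul_mul (hsymm t ht) (Q t))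
    (hnhds.mono fun t ht => (hQG t ht).2.1) (hnhds.mono fun t ht => (hQG t ht).2.2)
  refine ⟨fun t => Q t * S, fun t ht => analyticAt_matrix_mul (hQ t ht) analyticAt_const,
    fun t ht => ⟨?_, fun i j hij => ?_⟩⟩
  · rw [transpose_mul, mul_assoc, ← mul_assoc (Q t)ᵀ, (hQG t ht).1, one_mul, hS]
  · have hoff : AnalyticOnNhd ℝ (fun t => (Sᵀ * ((Q t)ᵀ * H t * Q t) * S) i j) I := fun t ht =>
      analyticAt_matrix_iff.1 (analyticAt_matrix_mul (analyticAt_matrix_mul analyticAt_const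
        (hG t ht)) analyticAt_const) i j
    have hzero : (Sᵀ * ((Q t)ᵀ * H t * Q t) * S) i j = 0 :=
      hoff.eqOn_zero_of_preconnected_of_eventuallyEq_zero hI'.isPreconnected ht₀
        (hdiag.mono fun s hs => hs hij) ht
    rw [transpose_mul, ← hzero]
    simp only [mul_assoc]

end GlobalRellich

section OrthonormalFrames

variable {m s : Type*} [Fintype m] [Fintype s] {I : Set ℝ}

theorem exists_forall_ne_eqOn_zero_of_mul_eqOn_zero {ι : Type*} [Nonempty ι] {f : ι → ℝ → ℝ}
    (hI : IsPreconnected I) (hf : ∀ i, AnalyticOnNhd ℝ (f i) I)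
    (hmul : ∀ i j, i ≠ j → ∀ t ∈ I, f i t * f j t = 0) :
    ∃ j, ∀ i ≠ j, ∀ t ∈ I, f i t = 0 := by
  by_cases hex : ∃ j, ∃ t ∈ I, f j t ≠ 0
  · obtain ⟨j, t, ht, hne⟩ := hex
    exact ⟨j, fun i hij => ((hf i).eq_zero_or_eq_zero_of_mul_eq_zero (hf j) (hmul i j hij)
      hI).resolve_right fun h => hne (h t ht)⟩
  · push Not at hex
    exact ⟨Classical.arbitrary ι, fun i _ => hex i⟩

/-- The nonzero eigenvector of `w wᵀ` in an analytic eigenframe is the normalization of `w`, also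
where `w` vanishes. -/
theorem exists_analyticOnNhd_smul_unit [Nonempty m] {w : ℝ → m → ℝ}
    (hI : IsOpen I) (hI' : I.OrdConnected) (hw : AnalyticOnNhd ℝ w I) :
    ∃ (b : ℝ → ℝ) (u : ℝ → m → ℝ), AnalyticOnNhd ℝ b I ∧ AnalyticOnNhd ℝ u I ∧
      ∀ t ∈ I, u t ⬝ᵥ u t = 1 ∧ w t = b t • u t := by
  classical
  have hwi : ∀ i, AnalyticOnNhd ℝ (fun t => w t i) I := fun i t ht =>
    analyticAt_pi_iff.1 (hw t ht) i
  obtain ⟨U, hU, hUw⟩ := exists_analyticOnNhd_orthogonal_isDiag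
    (H := fun t => vecMulVec (w t) (w t)) hI hI'
    (fun t ht => analyticAt_matrix_iff.2 fun i j => (hwi i t ht).mul (hwi j t ht))
    (fun t _ => transpose_vecMulVec _ _)
  have hUij : ∀ i j, AnalyticOnNhd ℝ (fun t => U t i j) I := fun i j t ht =>
    analyticAt_matrix_iff.1 (hU t ht) i j
  have hc : ∀ i, AnalyticOnNhd ℝ (fun t => ((U t)ᵀ *ᵥ w t) i) I := fun i t ht =>
    Finset.analyticAt_fun_sum _ fun k _ => (hUij k i t ht).mul (hwi k t ht)
  obtain ⟨j, hj⟩ := exists_forall_ne_eqOn_zero_of_mul_eqOn_zero hI'.isPreconnected hc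
    fun i j hij t ht => by
      have hdiag := (hUw t ht).2 hij
      rwa [mul_vecMulVec, vecMulVec_mul, ← mulVec_transpose] at hdiag
  refine ⟨fun t => ((U t)ᵀ *ᵥ w t) j, fun t => (U t).col j, hc j,
    fun t ht => analyticAt_pi_iff.2 fun i => hUij i j t ht,
    fun t ht => ⟨(congrFun₂ (hUw t ht).1 j j).trans (one_apply_eq j), ?_⟩⟩
  have hsingle : (U t)ᵀ *ᵥ w t = Pi.single j (((U t)ᵀ *ᵥ w t) j) := by
    ext i
    obtain rfl | hij := eq_or_ne i j
    · rw [Pi.single_eq_same]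
    · rw [Pi.single_eq_of_ne hij, hj i hij t ht]
  calc w t = U t *ᵥ (U t)ᵀ *ᵥ w t := by
        rw [mulVec_mulVec, mul_eq_one_comm.1 (hUw t ht).1, one_mulVec]
    _ = ((U t)ᵀ *ᵥ w t) j • (U t).col j := by
        rw [hsingle, mulVec_single, Pi.single_eq_same, op_smul_eq_smul]

theorem eqOn_zero_or_eqOn_one_of_mul_self_eq {d : ℝ → ℝ} (hI : IsPreconnected I)
    (hd : AnalyticOnNhd ℝ d I) (h : ∀ t ∈ I, d t * d t = d t) :
    (∀ t ∈ I, d t = 0) ∨ ∀ t ∈ I, d t = 1 :=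
  (hd.eq_zero_or_eq_zero_of_mul_eq_zero (hd.sub analyticOnNhd_const)
    (fun t ht => by rw [Pi.sub_apply, mul_sub, mul_one, h t ht, sub_self]) hI).imp_right
    fun h₁ t ht => sub_eq_zero.1 (h₁ t ht)

theorem mul_transpose_apply_self_mul_self {R : Type*} [CommSemiring R] [DecidableEq s]
    {M : Matrix m s R} (hM : Mᵀ * M = 1) (hdiag : (M * Mᵀ).IsDiag) (k : m) :
    (M * Mᵀ) k k * (M * Mᵀ) k k = (M * Mᵀ) k k := by
  classical
  have hidem : M * Mᵀ * (M * Mᵀ) = M * Mᵀ := by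
    rw [Matrix.mul_assoc, ← Matrix.mul_assoc Mᵀ, hM, Matrix.one_mul]
  rw [← hdiag.diagonal_diag, diagonal_mul_diagonal, diagonal_eq_diagonal_iff] at hidem
  exact hidem k

theorem card_mul_transpose_apply_self_eq_zero_add_card [DecidableEq s] {M : Matrix m s ℝ}
    (hM : Mᵀ * M = 1) (hdiag : (M * Mᵀ).IsDiag) :
    Finset.card {k | (M * Mᵀ) k k = 0} + Fintype.card s = Fintype.card m := by
  have htrace : (Finset.card {k | (M * Mᵀ) k k ≠ 0} : ℝ) = Fintype.card s :=
    calc (Finset.card {k | (M * Mᵀ) k k ≠ 0} : ℝ)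
        = ∑ k, if (M * Mᵀ) k k ≠ 0 then 1 else 0 := Finset.natCast_card_filter _ _
      _ = (M * Mᵀ).trace := Finset.sum_congr rfl fun k _ => by
        split_ifs with hk
        · exact (mul_right_cancel₀ hk <|
            (mul_transpose_apply_self_mul_self hM hdiag k).trans (one_mul _).symm).symm
        · exact (not_not.1 hk).symm
      _ = Fintype.card s := by rw [trace_mul_comm, hM, trace_one]
  rw [← Nat.cast_inj.1 htrace]
  exact Finset.card_filter_add_card_filter_not _

/-- The complement is spanned by the eigenvectors of the projection `T Tᵀ` of eigenvalue `0`: the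
eigenvalues are analytic with values in `{0, 1}`, hence constant, and add up to the rank of `T`. -/
theorem exists_analyticOnNhd_orthonormal_complement [DecidableEq m] [DecidableEq s]
    {T : ℝ → Matrix m s ℝ} (hI : IsOpen I) (hI' : I.OrdConnected) (hne : I.Nonempty)
    (hT : AnalyticOnNhd ℝ T I) (hTT : ∀ t ∈ I, (T t)ᵀ * T t = 1) :
    ∃ (K : Finset m) (F : ℝ → Matrix m K ℝ), K.card + Fintype.card s = Fintype.card m ∧
      AnalyticOnNhd ℝ F I ∧ ∀ t ∈ I, (F t)ᵀ * F t = 1 ∧ (T t)ᵀ * F t = 0 := by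
  obtain ⟨t₀, ht₀⟩ := hne
  obtain ⟨U, hU, hUP⟩ := exists_analyticOnNhd_orthogonal_isDiag (H := fun t => T t * (T t)ᵀ)
    hI hI' (fun t ht => analyticAt_matrix_mul (hT t ht) (analyticAt_matrix_transpose (hT t ht)))
    fun t _ => by rw [IsSymm, transpose_mul, transpose_transpose]
  let M : ℝ → Matrix m s ℝ := fun t => (U t)ᵀ * T t
  have hM : AnalyticOnNhd ℝ M I := fun t ht =>
    analyticAt_matrix_mul (analyticAt_matrix_transpose (hU t ht)) (hT t ht)
  have hMM : ∀ t ∈ I, (M t)ᵀ * M t = 1 := fun t ht => by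
    rw [transpose_mul, transpose_transpose, Matrix.mul_assoc, ← Matrix.mul_assoc (U t),
      mul_eq_one_comm.1 (hUP t ht).1, Matrix.one_mul, hTT t ht]
  have hdiag : ∀ t ∈ I, (M t * (M t)ᵀ).IsDiag := fun t ht => by
    simpa only [M, transpose_mul, transpose_transpose, Matrix.mul_assoc] using (hUP t ht).2
  have hconst : ∀ k, (M t₀ * (M t₀)ᵀ) k k = 0 → ∀ t ∈ I, (M t * (M t)ᵀ) k k = 0 := fun k hk =>
    (eqOn_zero_or_eqOn_one_of_mul_self_eq hI'.isPreconnected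
      (fun t ht => analyticAt_matrix_iff.1
        (analyticAt_matrix_mul (hM t ht) (analyticAt_matrix_transpose (hM t ht))) k k)
      fun t ht => mul_transpose_apply_self_mul_self (hMM t ht) (hdiag t ht) k).resolve_right
      fun h => zero_ne_one (hk.symm.trans (h t₀ ht₀))
  refine ⟨({k | (M t₀ * (M t₀)ᵀ) k k = 0} : Finset m), fun t => (U t).submatrix id (↑),
    card_mul_transpose_apply_self_eq_zero_add_card (hMM t₀ ht₀) (hdiag t₀ ht₀),
    fun t ht => analyticAt_matrix_submatrix (hU t ht) _ _, fun t ht => ⟨?_, ?_⟩⟩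
  · rw [transpose_submatrix, ← submatrix_mul _ _ _ _ _ Function.bijective_id, (hUP t ht).1,
      submatrix_one _ Subtype.val_injective]
  · ext i k
    have hrow : M t k = 0 :=
      dotProduct_self_eq_zero.1 (hconst k (Finset.mem_filter_univ k.1 |>.1 k.2) t ht)
    have hMt : (M t)ᵀ = (T t)ᵀ * U t := by rw [transpose_mul, transpose_transpose]
    exact (congrFun₂ hMt i k.1).symm.trans (congrFun hrow i)

theorem exists_analyticOnNhd_orthonormal_extension {n : Type*} [Fintype n] [DecidableEq n]
    {p : n → Prop} [DecidablePred p] (hmn : Fintype.card n ≤ Fintype.card m) (hI : IsOpen I)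
    (hI' : I.OrdConnected) {T : ℝ → Matrix m {i // p i} ℝ} (hT : AnalyticOnNhd ℝ T I)
    (hTT : ∀ t ∈ I, (T t)ᵀ * T t = 1) :
    ∃ U : ℝ → Matrix m n ℝ, AnalyticOnNhd ℝ U I ∧
      ∀ t ∈ I, (U t)ᵀ * U t = 1 ∧ (U t).submatrix id (↑) = T t := by
  classical
  obtain rfl | hne := I.eq_empty_or_nonempty
  · exact ⟨0, fun t ht => ht.elim, fun t ht => ht.elim⟩
  obtain ⟨K, F, hK, hF, hFT⟩ := exists_analyticOnNhd_orthonormal_complement hI hI' hne hT hTT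
  obtain ⟨e⟩ : Nonempty ({i // ¬p i} ↪ K) := by
    rw [Function.Embedding.nonempty_iff_card_le, Fintype.card_coe, Fintype.card_subtype_compl]
    lia
  refine ⟨fun t => (fromCols (T t) ((F t).submatrix id e)).submatrix id (Equiv.sumCompl p).symm,
    fun t ht => analyticAt_matrix_submatrix (analyticAt_matrix_iff.2 ?_) _ _,
    fun t ht => ⟨?_, ?_⟩⟩
  · rintro i (j | j)
    exacts [analyticAt_matrix_iff.1 (hT t ht) i j, analyticAt_matrix_iff.1 (hF t ht) i (e j)]
  · have hFe : ((F t).submatrix id e)ᵀ * (F t).submatrix id e = 1 := by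
      rw [transpose_submatrix, ← submatrix_mul _ _ _ _ _ Function.bijective_id, (hFT t ht).1,
        submatrix_one _ e.injective]
    have hTF : (T t)ᵀ * (F t).submatrix id e = 0 := by
      rw [← submatrix_id_id (T t)ᵀ, ← submatrix_mul _ _ _ _ _ Function.bijective_id, (hFT t ht).2,
        submatrix_zero]
      rfl
    have hFT' : ((F t).submatrix id e)ᵀ * T t = 0 := by
      rw [← transpose_transpose (T t), ← transpose_mul, hTF, transpose_zero]
    rw [transpose_submatrix, ← submatrix_mul _ _ _ _ _ Function.bijective_id, transpose_fromCols,
      fromRows_mul_fromCols, hTT t ht, hFe, hTF, hFT', fromBlocks_one, submatrix_one_equiv]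
  · ext i j
    change fromCols (T t) ((F t).submatrix id e) i ((Equiv.sumCompl p).symm j) = T t i j
    rw [Equiv.sumCompl_symm_apply_of_pos j.2]
    rfl

end OrthonormalFrames

section AnalyticSVD

variable {I : Set ℝ}

theorem eqOn_zero_dotProduct_of_smul {m : Type*} [Fintype m] {b c : ℝ → ℝ} {u v : ℝ → m → ℝ}
    (hI : IsPreconnected I) (hb : AnalyticOnNhd ℝ b I) (hc : AnalyticOnNhd ℝ c I)
    (hu : AnalyticOnNhd ℝ u I) (hv : AnalyticOnNhd ℝ v I) (hb₀ : ∃ t ∈ I, b t ≠ 0)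
    (hc₀ : ∃ t ∈ I, c t ≠ 0) (h : ∀ t ∈ I, (b t • u t) ⬝ᵥ (c t • v t) = 0) :
    ∀ t ∈ I, u t ⬝ᵥ v t = 0 := by
  have huv : AnalyticOnNhd ℝ (fun t => u t ⬝ᵥ v t) I := fun t ht =>
    Finset.analyticAt_fun_sum _ fun k _ =>
      (analyticAt_pi_iff.1 (hu t ht) k).mul (analyticAt_pi_iff.1 (hv t ht) k)
  have hprod : ∀ t ∈ I, b t * (c t * (u t ⬝ᵥ v t)) = 0 := fun t ht => by
    rw [← h t ht, smul_dotProduct, dotProduct_smul, smul_eq_mul, smul_eq_mul]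
  obtain ⟨t₁, ht₁, hb₁⟩ := hb₀
  obtain ⟨t₂, ht₂, hc₂⟩ := hc₀
  have hcuv := (hb.eq_zero_or_eq_zero_of_mul_eq_zero (hc.mul huv) hprod hI).resolve_left
    fun hb' => hb₁ (hb' t₁ ht₁)
  exact (hc.eq_zero_or_eq_zero_of_mul_eq_zero huv hcuv hI).resolve_left
    fun hc' => hc₂ (hc' t₂ ht₂)

/-- Columns that vanish identically contribute only zero singular values, so their directions may be
replaced by any completion of the remaining ones to an orthonormal family. -/
theorem exists_analyticOnNhd_orthonormal_mul_diagonal {m n : Type*} [Fintype m] [Fintype n]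
    [DecidableEq n] (hmn : Fintype.card n ≤ Fintype.card m) {B : ℝ → Matrix m n ℝ} (hI : IsOpen I)
    (hI' : I.OrdConnected) (hB : AnalyticOnNhd ℝ B I) (hdiag : ∀ t ∈ I, ((B t)ᵀ * B t).IsDiag) :
    ∃ (U : ℝ → Matrix m n ℝ) (σ : ℝ → n → ℝ), AnalyticOnNhd ℝ U I ∧ AnalyticOnNhd ℝ σ I ∧
      ∀ t ∈ I, B t = U t * diagonal (σ t) ∧ (U t)ᵀ * U t = 1 := by
  classical
  choose b u hb hu hbu using fun i : n =>
    have : Nonempty m := Fintype.card_pos_iff.1 ((Fintype.card_pos_iff.2 ⟨i⟩).trans_le hmn)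
    exists_analyticOnNhd_smul_unit (w := fun t => (B t).col i) hI hI' fun t ht =>
      analyticAt_pi_iff.2 fun k => analyticAt_matrix_iff.1 (hB t ht) k i
  let p : n → Prop := fun i => ∃ t ∈ I, b i t ≠ 0
  have hortho : ∀ i j, p i → p j → i ≠ j → ∀ t ∈ I, u i t ⬝ᵥ u j t = 0 := fun i j hi hj hij =>
    eqOn_zero_dotProduct_of_smul hI'.isPreconnected (hb i) (hb j) (hu i) (hu j) hi hj
      fun t ht => by
        rw [← (hbu i t ht).2, ← (hbu j t ht).2]
        exact hdiag t ht hij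
  obtain ⟨U, hU, hUT⟩ := exists_analyticOnNhd_orthonormal_extension (p := p)
    (T := fun t => of fun k i => u i t k) hmn hI hI'
    (fun t ht => analyticAt_matrix_iff.2 fun k i => analyticAt_pi_iff.1 (hu i t ht) k)
    (fun t ht => by
      ext i j
      obtain rfl | hij := eq_or_ne i j
      · exact (hbu i t ht).1.trans (one_apply_eq i).symm
      · exact (hortho i j i.2 j.2 (Subtype.coe_ne_coe.2 hij) t ht).trans (one_apply_ne hij).symm)
  refine ⟨U, fun t i => b i t, hU, fun t ht => analyticAt_pi_iff.2 fun i => hb i t ht,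
    fun t ht => ⟨?_, (hUT t ht).1⟩⟩
  ext k i
  have hBki : B t k i = b i t * u i t k := congrFun (hbu i t ht).2 k
  rw [mul_diagonal, hBki, mul_comm]
  by_cases hi : p i
  · exact congrArg (· * b i t) (congrFun₂ (hUT t ht).2 k ⟨i, hi⟩).symm
  · have hbi : b i t = 0 := by_contra fun h => hi ⟨t, ht, h⟩
    simp only [hbi, mul_zero]

theorem exists_analyticOnNhd_svd_of_card_le {m n : Type*} [Fintype m] [Fintype n] [DecidableEq n]
    (hmn : Fintype.card n ≤ Fintype.card m) {A : ℝ → Matrix m n ℝ} (hI : IsOpen I)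
    (hI' : I.OrdConnected) (hA : AnalyticOnNhd ℝ A I) :
    ∃ (U : ℝ → Matrix m n ℝ) (σ : ℝ → n → ℝ) (V : ℝ → Matrix n n ℝ),
      AnalyticOnNhd ℝ U I ∧ AnalyticOnNhd ℝ σ I ∧ AnalyticOnNhd ℝ V I ∧
      ∀ t ∈ I, A t = U t * diagonal (σ t) * (V t)ᵀ ∧ (U t)ᵀ * U t = 1 ∧ (V t)ᵀ * V t = 1 := by
  obtain ⟨V, hV, hVA⟩ := exists_analyticOnNhd_orthogonal_isDiag (H := fun t => (A t)ᵀ * A t) hI hI'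
    (fun t ht => analyticAt_matrix_mul (analyticAt_matrix_transpose (hA t ht)) (hA t ht))
    fun t _ => by rw [IsSymm, transpose_mul, transpose_transpose]
  obtain ⟨U, σ, hU, hσ, hUσ⟩ := exists_analyticOnNhd_orthonormal_mul_diagonal hmn
    (B := fun t => A t * V t) hI hI' (fun t ht => analyticAt_matrix_mul (hA t ht) (hV t ht))
    fun t ht => by simpa only [transpose_mul, Matrix.mul_assoc] using (hVA t ht).2
  refine ⟨U, σ, V, hU, hσ, hV, fun t ht => ⟨?_, (hUσ t ht).2, (hVA t ht).1⟩⟩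
  rw [← (hUσ t ht).1, Matrix.mul_assoc, mul_eq_one_comm.1 (hVA t ht).1, Matrix.mul_one]

theorem exists_analyticOnNhd_svd {m n : ℕ} {A : ℝ → Matrix (Fin m) (Fin n) ℝ} (hI : IsOpen I)
    (hI' : I.OrdConnected) (hA : AnalyticOnNhd ℝ A I) :
    ∃ (U : ℝ → Matrix (Fin m) (Fin (min m n)) ℝ) (σ : ℝ → Fin (min m n) → ℝ)
      (V : ℝ → Matrix (Fin n) (Fin (min m n)) ℝ),
      AnalyticOnNhd ℝ U I ∧ AnalyticOnNhd ℝ σ I ∧ AnalyticOnNhd ℝ V I ∧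
      ∀ t ∈ I, A t = U t * diagonal (σ t) * (V t)ᵀ ∧ (U t)ᵀ * U t = 1 ∧ (V t)ᵀ * V t = 1 := by
  obtain ⟨k, hk⟩ : ∃ k, k = min m n := ⟨_, rfl⟩
  rw [← hk]
  obtain hnm | hmn := le_total n m
  · obtain rfl : k = n := hk.trans (min_eq_right hnm)
    exact exists_analyticOnNhd_svd_of_card_le (by simpa only [Fintype.card_fin]) hI hI' hA
  · obtain rfl : k = m := hk.trans (min_eq_left hmn)
    obtain ⟨U, σ, V, hU, hσ, hV, hsvd⟩ := exists_analyticOnNhd_svd_of_card_le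
      (by simpa only [Fintype.card_fin]) hI hI' fun t ht => analyticAt_matrix_transpose (hA t ht)
    refine ⟨V, σ, U, hV, hσ, hU, fun t ht => ⟨?_, (hsvd t ht).2.2, (hsvd t ht).2.1⟩⟩
    rw [← transpose_transpose (A t), (hsvd t ht).1, transpose_mul, transpose_mul,
      transpose_transpose, diagonal_transpose, Matrix.mul_assoc]

end AnalyticSVD

section GradientFlow

theorem analyticAt_of_frobenius_gradient {m n : Type*} [Fintype m] [Fintype n]
    {ℓ : Matrix m n ℝ → ℝ} {g : Matrix m n ℝ → Matrix m n ℝ} {X : Matrix m n ℝ}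
    (hℓ : AnalyticAt ℝ ℓ X)
    (hg : ∀ Y H, HasDerivAt (fun s : ℝ => ℓ (Y + s • H)) (((g Y)ᵀ * H).trace) 0) :
    AnalyticAt ℝ g X := by
  classical
  refine analyticAt_matrix_iff.2 fun p q => ?_
  have hpartial : (fun Y => g Y p q) =ᶠ[𝓝 X] fun Y => fderiv ℝ ℓ Y (single p q 1) := by
    filter_upwards [hℓ.eventually_analyticAt] with Y hY
    have hline : HasDerivAt (fun s : ℝ => ℓ (Y + s • single p q (1 : ℝ)))
        (fderiv ℝ ℓ Y (single p q 1)) 0 :=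
      hY.differentiableAt.hasFDerivAt.hasLineDerivAt _
    have hentry : ((g Y)ᵀ * single p q (1 : ℝ)).trace = g Y p q := by simp [trace_mul_single]
    exact hentry.symm.trans ((hg Y _).unique hline)
  exact (((ContinuousLinearMap.apply ℝ ℝ (single p q (1 : ℝ))).analyticAt _).comp hℓ.fderiv).congr
    hpartial.symm

variable {dims : ℕ → ℕ}

theorem chainProd_congr {X Y : (j : ℕ) → Matrix (Fin (dims j)) (Fin (dims (j - 1))) ℝ} {hi : ℕ}
    (hXY : ∀ j, 1 ≤ j → j ≤ hi → X j = Y j) (lo : ℕ) :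
    chainProd dims X lo hi = chainProd dims Y lo hi := by
  induction hi with
  | zero => rfl
  | succ n ih =>
    rw [chainProd, chainProd, hXY (n + 1) (by lia) le_rfl, ih fun j h₁ h₂ => hXY j h₁ (by lia)]

theorem analyticAt_chainProd {E : Type*} [NormedAddCommGroup E] [NormedSpace ℝ E]
    {X : (j : ℕ) → E → Matrix (Fin (dims j)) (Fin (dims (j - 1))) ℝ} {x : E} {hi : ℕ}
    (hX : ∀ j, 1 ≤ j → j ≤ hi → AnalyticAt ℝ (X j) x) (lo : ℕ) :
    AnalyticAt ℝ (fun y => chainProd dims (fun j => X j y) lo hi) x := by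
  induction hi with
  | zero => exact analyticAt_const
  | succ n ih =>
    by_cases hn : n + 1 = lo
    · simp only [chainProd, dif_pos hn]
      exact analyticAt_const
    · simp only [chainProd, dif_neg hn]
      exact analyticAt_matrix_mul (hX (n + 1) (by lia) le_rfl)
        (ih fun j h₁ h₂ => hX j h₁ (by lia))

variable {N : ℕ}

/-- The sequence of layers formed by an `N`-tuple, with the indexing of `chainProd`: the entry `j`
of the tuple is layer `j + 1`, and all other layers are zero. -/
def layerSeq (X : (j : Fin N) → Matrix (Fin (dims (j + 1))) (Fin (dims (j + 1 - 1))) ℝ) :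
    (j : ℕ) → Matrix (Fin (dims j)) (Fin (dims (j - 1))) ℝ
  | 0 => 0
  | j + 1 => if h : j < N then X ⟨j, h⟩ else 0

theorem analyticAt_layerSeq
    (X : (j : Fin N) → Matrix (Fin (dims (j + 1))) (Fin (dims (j + 1 - 1))) ℝ) (j : ℕ) :
    AnalyticAt ℝ (fun X => layerSeq X j) X := by
  obtain _ | j := j
  · exact analyticAt_const
  · by_cases h : j < N
    · simp only [layerSeq, dif_pos h]
      exact analyticAt_pi_iff.1 analyticAt_id (⟨j, h⟩ : Fin N)
    · simp only [layerSeq, dif_neg h]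
      exact analyticAt_const

theorem chainProd_layerSeq (W : (j : ℕ) → Matrix (Fin (dims j)) (Fin (dims (j - 1))) ℝ) (lo : ℕ)
    {hi : ℕ} (h : hi ≤ N) :
    chainProd dims (layerSeq fun j : Fin N => W (j + 1)) lo hi = chainProd dims W lo hi := by
  refine chainProd_congr (fun j hj hj' => ?_) lo
  obtain ⟨j, rfl⟩ := Nat.exists_eq_add_of_le' hj
  exact dif_pos (by lia)

/-- The vector field of the gradient flow of `ℓ (W_N ⋯ W₁)` on the space of `N`-tuples of layers,
where `g` is the gradient of `ℓ`. -/
noncomputable def gradientFlowField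
    (g : Matrix (Fin (dims N)) (Fin (dims 0)) ℝ → Matrix (Fin (dims N)) (Fin (dims 0)) ℝ)
    (X : (j : Fin N) → Matrix (Fin (dims (j + 1))) (Fin (dims (j + 1 - 1))) ℝ) :
    (j : Fin N) → Matrix (Fin (dims (j + 1))) (Fin (dims (j + 1 - 1))) ℝ := fun j =>
  -((chainProd dims (layerSeq X) (j + 1) N)ᵀ * g (chainProd dims (layerSeq X) 0 N) *
    (chainProd dims (layerSeq X) 0 (j + 1 - 1))ᵀ)

variable {g : Matrix (Fin (dims N)) (Fin (dims 0)) ℝ → Matrix (Fin (dims N)) (Fin (dims 0)) ℝ}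

theorem analyticAt_gradientFlowField
    {X : (j : Fin N) → Matrix (Fin (dims (j + 1))) (Fin (dims (j + 1 - 1))) ℝ}
    (hg : AnalyticAt ℝ g (chainProd dims (layerSeq X) 0 N)) :
    AnalyticAt ℝ (gradientFlowField g) X := by
  have hchain : ∀ lo hi, AnalyticAt ℝ (fun X => chainProd dims (layerSeq X) lo hi) X :=
    fun lo hi => analyticAt_chainProd (fun j _ _ => analyticAt_layerSeq X j) lo
  exact analyticAt_pi_iff.2 fun j => (analyticAt_matrix_mul
    (analyticAt_matrix_mul (analyticAt_matrix_transpose (hchain _ _)) (hg.comp (hchain _ _)))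
    (analyticAt_matrix_transpose (hchain _ _))).neg

theorem analyticAt_chainProd_of_hasDerivAt_gradientFlowField
    {W : (j : ℕ) → ℝ → Matrix (Fin (dims j)) (Fin (dims (j - 1))) ℝ} {t : ℝ}
    (hg : AnalyticAt ℝ g (chainProd dims (fun j => W j t) 0 N))
    (hW : ∀ᶠ s in 𝓝 t, HasDerivAt (fun s (j : Fin N) => W (j + 1) s)
      (gradientFlowField g fun j => W (j + 1) s) s) :
    AnalyticAt ℝ (fun s => chainProd dims (fun j => W j s) 0 N) t := by
  rw [← chainProd_layerSeq _ _ le_rfl] at hg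
  have hlayers : AnalyticAt ℝ (fun s (j : Fin N) => W (j + 1) s) t :=
    analyticAt_of_eventually_hasDerivAt (analyticAt_gradientFlowField hg) hW
  refine analyticAt_chainProd (fun j hj hjN => ?_) 0
  obtain ⟨j, rfl⟩ := Nat.exists_eq_add_of_le' hj
  exact analyticAt_pi_iff.1 hlayers ⟨j, by lia⟩

end GradientFlow

/-- Analytic SVD of the product matrix of a deep linear network under gradient flow:
if `ℓ` is real-analytic with Frobenius gradient `gradℓ`, and the factors `W j` obey the
gradient-flow equations on an open interval `I`, then the product matrix
`W_N ⋯ W_1` admits a real-analytic singular value decomposition on `I`. -/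
theorem stmt7 (N : ℕ) (hN : 1 ≤ N) (dims : ℕ → ℕ)
    (ℓ : Matrix (Fin (dims N)) (Fin (dims 0)) ℝ → ℝ)
    (hℓ : AnalyticOnNhd ℝ ℓ Set.univ)
    (gradℓ : Matrix (Fin (dims N)) (Fin (dims 0)) ℝ →
      Matrix (Fin (dims N)) (Fin (dims 0)) ℝ)
    (hgrad : ∀ Wm H, HasDerivAt (fun s : ℝ => ℓ (Wm + s • H))
      (((gradℓ Wm)ᵀ * H).trace) 0)
    (I : Set ℝ) (hI_open : IsOpen I) (hI_conn : I.OrdConnected)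
    (W : (j : ℕ) → ℝ → Matrix (Fin (dims j)) (Fin (dims (j - 1))) ℝ)
    (hW_flow : ∀ t ∈ I, ∀ j, 1 ≤ j → j ≤ N →
      ∀ (p : Fin (dims j)) (q : Fin (dims (j - 1))),
      HasDerivAt (fun s => W j s p q)
        ((-((chainProd dims (fun i => W i t) j N)ᵀ *
            gradℓ (chainProd dims (fun i => W i t) 0 N) *
            (chainProd dims (fun i => W i t) 0 (j - 1))ᵀ)) p q) t) :
    ∃ (U : ℝ → Matrix (Fin (dims N)) (Fin (min (dims N) (dims 0))) ℝ)
      (σ : ℝ → Fin (min (dims N) (dims 0)) → ℝ)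
      (V : ℝ → Matrix (Fin (dims 0)) (Fin (min (dims N) (dims 0))) ℝ),
      AnalyticOnNhd ℝ U I ∧ AnalyticOnNhd ℝ σ I ∧ AnalyticOnNhd ℝ V I ∧
      ∀ t ∈ I,
        chainProd dims (fun i => W i t) 0 N = U t * Matrix.diagonal (σ t) * (V t)ᵀ ∧
        (U t)ᵀ * U t = 1 ∧ (V t)ᵀ * V t = 1 := by
  have hflow : ∀ t ∈ I, HasDerivAt (fun s (j : Fin N) => W (j + 1) s)
      (gradientFlowField gradℓ fun j => W (j + 1) t) t := fun t ht =>
    hasDerivAt_pi.2 fun j => hasDerivAt_matrix_iff_s7.2 fun p q => by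
      have hj : (j : ℕ) + 1 - 1 ≤ N := by lia
      simp only [gradientFlowField, chainProd_layerSeq (fun i => W i t) _ le_rfl,
        chainProd_layerSeq (fun i => W i t) _ hj]
      exact hW_flow t ht (j + 1) (by lia) (by lia) p q
  refine exists_analyticOnNhd_svd hI_open hI_conn fun t ht => ?_
  exact analyticAt_chainProd_of_hasDerivAt_gradientFlowField
    (analyticAt_of_frobenius_gradient (hℓ _ (Set.mem_univ _)) hgrad)
    (eventually_of_mem (hI_open.mem_nhds ht) hflow)
end
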